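/- arXiv:1703.02526 — 2 statements merged into one kernel-verified Lean document; each statement's English description precedes it below -/
import Mathlib

section
/- Let F and F̂ be nonempty compact subsets of ℝ^d and suppose F̂ is a fast pseudo-tangent of F, i.e. there are bi-Lipschitz maps T_k : ℝ^d → ℝ^d with constants 0 < a_k ≤ b_k (a_k‖x−y‖ ≤ ‖T_k(x) − T_k(y)‖ ≤ b_k‖x−y‖ for all x, y) satisfying sup_k b_k/a_k < ∞ and sup_k b_k = ∞, and constants C, ε > 0, such that the one-sided distance p_H(F̂, T_k(F)) ≤ C b_k^{−ε} for all k. Then the lower box dimension of F̂ is at most the quasi-Assouad dimension of F: \underline{dim}_B F̂ ≤ dim_qA F. -/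
open Metric Filter Set
open scoped ENNReal

/-- `N_r(A)`: the least number of closed balls of radius `r` needed to cover `A`. -/
noncomputable def coverNum {X : Type*} [PseudoMetricSpace X] (A : Set X) (r : ℝ) : ℕ :=
  sInf {n : ℕ | ∃ S : Finset X, S.card = n ∧ A ⊆ ⋃ x ∈ S, closedBall x r}

/-- `N_{r,R}(E) = sup_{x ∈ E} N_r(E ∩ B(x,R))`. -/
noncomputable def coverNumLoc {X : Type*} [PseudoMetricSpace X] (E : Set X) (r R : ℝ) : ℕ :=
  sSup {n : ℕ | ∃ x ∈ E, n = coverNum (E ∩ closedBall x R) r}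

/-- Upper box dimension `limsup_{r → 0⁺} log N_r(E) / log (1/r)`. -/
noncomputable def upperBoxDim {X : Type*} [PseudoMetricSpace X] (E : Set X) : ℝ :=
  limsup (fun r : ℝ => Real.log (coverNum E r) / Real.log (1 / r)) (nhdsWithin 0 (Ioi 0))

/-- Lower box dimension `liminf_{r → 0⁺} log N_r(E) / log (1/r)`. -/
noncomputable def lowerBoxDim {X : Type*} [PseudoMetricSpace X] (E : Set X) : ℝ :=
  liminf (fun r : ℝ => Real.log (coverNum E r) / Real.log (1 / r)) (nhdsWithin 0 (Ioi 0))

/-- `h̄_E(δ)`: the infimum of all `α ≥ 0` such that for some `b, c > 0`,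
`N_{r,R}(E) ≤ c (R/r)^α` whenever `0 < r ≤ R^{1+δ} ≤ R ≤ b`. -/
noncomputable def hUpper {X : Type*} [PseudoMetricSpace X] (E : Set X) (δ : ℝ) : ℝ :=
  sInf {α : ℝ | 0 ≤ α ∧ ∃ b c : ℝ, 0 < b ∧ 0 < c ∧ ∀ r R : ℝ,
    0 < r → r ≤ R ^ (1 + δ) → R ^ (1 + δ) ≤ R → R ≤ b →
    (coverNumLoc E r R : ℝ) ≤ c * (R / r) ^ α}

/-- `h̲_E(δ)`: the supremum of all `α ≥ 0` such that for some `b, c > 0`,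
`N_{r,R}(E) ≥ c (R/r)^α` whenever `0 < r ≤ R^{1+δ} ≤ R ≤ b`. -/
noncomputable def hLower {X : Type*} [PseudoMetricSpace X] (E : Set X) (δ : ℝ) : ℝ :=
  sSup {α : ℝ | 0 ≤ α ∧ ∃ b c : ℝ, 0 < b ∧ 0 < c ∧ ∀ r R : ℝ,
    0 < r → r ≤ R ^ (1 + δ) → R ^ (1 + δ) ≤ R → R ≤ b →
    c * (R / r) ^ α ≤ (coverNumLoc E r R : ℝ)}

/-- The quasi-Assouad dimension `dim_qA E = lim_{δ → 0⁺} h̄_E(δ)`; since `h̄_E` is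
nonincreasing this limit equals the supremum over `δ ∈ (0,1)`. -/
noncomputable def qADim {X : Type*} [PseudoMetricSpace X] (E : Set X) : ℝ :=
  sSup (hUpper E '' Ioo (0:ℝ) 1)

/-- The quasi-lower Assouad dimension `dim_qL E = lim_{δ → 0⁺} h̲_E(δ)`; since `h̲_E` is
nondecreasing this limit equals the infimum over `δ ∈ (0,1)`. -/
noncomputable def qLDim {X : Type*} [PseudoMetricSpace X] (E : Set X) : ℝ :=
  sInf (hLower E '' Ioo (0:ℝ) 1)

/-- Assouad dimension `dim_A E = h̄_E(0)`. -/
noncomputable def assouadDim {X : Type*} [PseudoMetricSpace X] (E : Set X) : ℝ := hUpper E 0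

/-- Lower (Assouad) dimension `dim_L E = h̲_E(0)`. -/
noncomputable def lowerAssouadDim {X : Type*} [PseudoMetricSpace X] (E : Set X) : ℝ := hLower E 0

/-- One-sided pseudo-distance `p_H(A, B) = sup_{x ∈ A} inf_{y ∈ B} ‖x − y‖`. -/
noncomputable def pH {X : Type*} [PseudoMetricSpace X] (A B : Set X) : ℝ :=
  sSup ((fun x => infDist x B) '' A)


section aux

lemma coverNum_le_aux {X : Type*} [PseudoMetricSpace X] {A : Set X} {r : ℝ} (S : Finset X)
    (h : A ⊆ ⋃ x ∈ S, closedBall x r) : coverNum A r ≤ S.card :=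
  Nat.sInf_le ⟨S, rfl, h⟩

lemma exists_cover_aux {X : Type*} [PseudoMetricSpace X] {K A : Set X} (hK : IsCompact K)
    (hA : A ⊆ K) {r : ℝ} (hr : 0 < r) :
    ∃ S : Finset X, S.card = coverNum A r ∧ A ⊆ ⋃ x ∈ S, closedBall x r := by
  have hne : {n : ℕ | ∃ S : Finset X, S.card = n ∧ A ⊆ ⋃ x ∈ S, closedBall x r}.Nonempty := by
    obtain ⟨t, ht, hcov⟩ := Metric.totallyBounded_iff.1 hK.totallyBounded r hr
    refine ⟨_, ht.toFinset, rfl, fun x hx => ?_⟩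
    obtain ⟨y, hy, hxy⟩ := mem_iUnion₂.1 (hcov (hA hx))
    exact mem_iUnion₂.2 ⟨y, ht.mem_toFinset.2 hy, ball_subset_closedBall hxy⟩
  exact Nat.sInf_mem hne

lemma coverNum_le_coverNumLoc {X : Type*} [PseudoMetricSpace X] {F : Set X} (hF : IsCompact F)
    {r R : ℝ} (hr : 0 < r) {x : X} (hx : x ∈ F) :
    coverNum (F ∩ closedBall x R) r ≤ coverNumLoc F r R := by
  refine le_csSup ⟨coverNum F r, ?_⟩ ⟨x, hx, rfl⟩
  rintro n ⟨y, hy, rfl⟩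
  obtain ⟨S, hS, hc⟩ := exists_cover_aux hF subset_rfl hr
  rw [← hS]
  exact coverNum_le_aux S (inter_subset_left.trans hc)

lemma card_sep_le {d : ℕ} (s : Finset (EuclideanSpace ℝ (Fin d))) (x : EuclideanSpace ℝ (Fin d))
    {r R : ℝ} (hr : 0 < r) (hrR : r ≤ R) (hs : ∀ c ∈ s, dist c x ≤ R)
    (h : ∀ c ∈ s, ∀ e ∈ s, c ≠ e → r ≤ dist c e) : (s.card : ℝ) ≤ (4 * R / r) ^ d := by
  let μ : MeasureTheory.Measure (EuclideanSpace ℝ (Fin d)) := MeasureTheory.volume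
  have hR : 0 < R := hr.trans_le hrR
  have hr2 : 0 < r / 2 := by linarith
  have hR2 : 0 < 2 * R := by linarith
  set A := ⋃ c ∈ s, ball c (r / 2) with hA
  have D : Set.Pairwise (s : Set (EuclideanSpace ℝ (Fin d)))
      (Function.onFun Disjoint fun c => ball c (r / 2)) := by
    rintro c hc e he hce
    apply ball_disjoint_ball
    have := h c hc e he hce
    linarith
  have A_subset : A ⊆ ball x (2 * R) := by
    refine iUnion₂_subset fun c hc => ?_
    apply ball_subset_ball'
    have := hs c hc
    linarith
  have I :
    (s.card : ℝ≥0∞) * ENNReal.ofReal ((r / 2) ^ d) * μ (ball 0 1) ≤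
      ENNReal.ofReal ((2 * R) ^ d) * μ (ball 0 1) :=
    calc
      (s.card : ℝ≥0∞) * ENNReal.ofReal ((r / 2) ^ d) * μ (ball 0 1) = μ A := by
        rw [hA, MeasureTheory.measure_biUnion_finset D fun c _ => measurableSet_ball]
        simp only [μ.addHaar_ball_of_pos _ hr2]
        simp only [Finset.sum_const, nsmul_eq_mul, mul_assoc, finrank_euclideanSpace_fin]
      _ ≤ μ (ball x (2 * R)) := MeasureTheory.measure_mono A_subset
      _ = ENNReal.ofReal ((2 * R) ^ d) * μ (ball 0 1) := by
        simp only [μ.addHaar_ball_of_pos _ hR2, finrank_euclideanSpace_fin]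
  have J : (s.card : ℝ≥0∞) * ENNReal.ofReal ((r / 2) ^ d) ≤ ENNReal.ofReal ((2 * R) ^ d) :=
    (ENNReal.mul_le_mul_iff_left (measure_ball_pos _ _ zero_lt_one).ne'
      MeasureTheory.measure_ball_lt_top.ne).1 I
  have K := ENNReal.toReal_le_of_le_ofReal (pow_nonneg hR2.le _) J
  rw [ENNReal.toReal_mul, ENNReal.toReal_ofReal (by positivity), ENNReal.toReal_natCast] at K
  have e : (4 * R / r) ^ d = (2 * R) ^ d / (r / 2) ^ d := by
    rw [← div_pow]; congr 1; field_simp; ring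
  rw [e, le_div_iff₀ (by positivity)]
  exact K

lemma coverNum_ball_le {d : ℕ} (A : Set (EuclideanSpace ℝ (Fin d)))
    (x : EuclideanSpace ℝ (Fin d)) {r R : ℝ} (hr : 0 < r) (hrR : r ≤ R) :
    (coverNum (A ∩ closedBall x R) r : ℝ) ≤ (4 * R / r) ^ d := by
  classical
  let P : Set ℕ := {n | ∃ s : Finset (EuclideanSpace ℝ (Fin d)), s.card = n ∧
    (∀ c ∈ s, dist c x ≤ R) ∧ (∀ c ∈ s, ∀ e ∈ s, c ≠ e → r ≤ dist c e)}
  have hne : P.Nonempty := ⟨0, ∅, by simp⟩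
  have hbdd : BddAbove P := by
    refine ⟨⌊(4 * R / r) ^ d⌋₊, ?_⟩
    rintro n ⟨s, rfl, h1, h2⟩
    exact Nat.le_floor (card_sep_le s x hr hrR h1 h2)
  obtain ⟨s, hsn, h1, h2⟩ := Nat.sSup_mem hne hbdd
  refine le_trans ?_ (card_sep_le s x hr hrR h1 h2)
  norm_cast
  apply coverNum_le_aux
  rintro y ⟨-, hy⟩
  by_contra hcon
  simp only [mem_iUnion, mem_closedBall, not_exists, not_le] at hcon
  have hys : y ∉ s := fun hm => by
    have := hcon y hm
    rw [dist_self] at this; linarith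
  have hmem : s.card + 1 ∈ P := by
    refine ⟨insert y s, Finset.card_insert_of_notMem hys, ?_, ?_⟩
    · intro c hc
      rcases Finset.mem_insert.1 hc with rfl | hc
      · exact hy
      · exact h1 c hc
    · intro c hc e he hce
      rcases Finset.mem_insert.1 hc with rfl | hc2
      · rcases Finset.mem_insert.1 he with rfl | he
        · exact absurd rfl hce
        · exact (hcon e he).le
      · rcases Finset.mem_insert.1 he with rfl | he
        · rw [dist_comm]; exact (hcon c hc2).le
        · exact h2 c hc2 e he hce
  have := le_csSup hbdd hmem
  omega

lemma dim_mem_hset {d : ℕ} (F : Set (EuclideanSpace ℝ (Fin d))) (hFne : F.Nonempty) (δ : ℝ) :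
    (d : ℝ) ∈ {α : ℝ | 0 ≤ α ∧ ∃ b c : ℝ, 0 < b ∧ 0 < c ∧ ∀ r R : ℝ,
    0 < r → r ≤ R ^ (1 + δ) → R ^ (1 + δ) ≤ R → R ≤ b →
    (coverNumLoc F r R : ℝ) ≤ c * (R / r) ^ α} := by
  refine ⟨by positivity, 1, 4 ^ d, one_pos, by positivity, fun r R hr h1 h2 _ => ?_⟩
  have hrR := h1.trans h2
  rw [Real.rpow_natCast, ← mul_pow, ← mul_div_assoc]
  have : coverNumLoc F r R ≤ ⌊(4 * R / r) ^ d⌋₊ := by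
    obtain ⟨x, hx⟩ := hFne
    refine csSup_le ⟨_, x, hx, rfl⟩ ?_
    rintro n ⟨y, hy, rfl⟩
    exact Nat.le_floor (coverNum_ball_le F y hr hrR)
  have hR : 0 < R := hr.trans_le hrR
  exact (Nat.le_floor_iff (by positivity)).1 this

lemma one_le_coverNum {X : Type*} [PseudoMetricSpace X] {A : Set X} (hA : IsCompact A)
    (hne : A.Nonempty) {r : ℝ} (hr : 0 < r) : 1 ≤ coverNum A r := by
  obtain ⟨S, hS, hc⟩ := exists_cover_aux hA subset_rfl hr
  obtain ⟨x, hx⟩ := hne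
  obtain ⟨y, hy, -⟩ := mem_iUnion₂.1 (hc hx)
  rw [← hS]
  exact Finset.card_pos.2 ⟨y, hy⟩

end aux

/-- If `Fhat` is a fast pseudo-tangent of `F`, then
`\underline{dim}_B Fhat ≤ dim_qA F`. -/
theorem lowerBoxDim_fastPseudoTangent_le_qADim
    {d : ℕ} (F Fhat : Set (EuclideanSpace ℝ (Fin d)))
    (hFc : IsCompact F) (hFne : F.Nonempty)
    (hFhatc : IsCompact Fhat) (hFhatne : Fhat.Nonempty)
    (T : ℕ → EuclideanSpace ℝ (Fin d) → EuclideanSpace ℝ (Fin d)) (a b : ℕ → ℝ) (C ε : ℝ)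
    (ha : ∀ k, 0 < a k) (hab : ∀ k, a k ≤ b k)
    (hbiLip : ∀ k x y, a k * ‖x - y‖ ≤ ‖T k x - T k y‖ ∧ ‖T k x - T k y‖ ≤ b k * ‖x - y‖)
    (hratio : ∃ M : ℝ, ∀ k, b k / a k ≤ M)
    (hbtop : ∀ M : ℝ, ∃ k, M ≤ b k)
    (hC : 0 < C) (hε : 0 < ε)
    (hfast : ∀ k, pH Fhat (T k '' F) ≤ C * b k ^ (-ε)) :
    lowerBoxDim Fhat ≤ qADim F := by
  obtain ⟨M, hM⟩ := hratio
  set δ : ℝ := min ε 1 / 2 with hδ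
  have hmin : 0 < min ε 1 := lt_min hε one_pos
  have hδ0 : 0 < δ := by positivity
  have hδε : δ < ε := by have := min_le_left ε 1; linarith
  have hδ1 : δ < 1 := by have := min_le_right ε 1; linarith
  have hq : hUpper F δ ≤ qADim F := by
    refine le_csSup ⟨d, ?_⟩ ⟨δ, ⟨hδ0, hδ1⟩, rfl⟩
    rintro _ ⟨δ', -, rfl⟩
    exact csInf_le ⟨0, fun α h => h.1⟩ (dim_mem_hset F hFne δ')
  refine le_trans ?_ hq
  refine le_csInf ⟨_, dim_mem_hset F hFne δ⟩ ?_
  rintro α ⟨hα, b₀, c, hb₀, hc, hcov⟩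
  refine le_of_forall_pos_le_add fun η hη => ?_
  have hbb : IsBoundedUnder (· ≥ ·) (nhdsWithin 0 (Ioi 0))
      (fun r : ℝ => Real.log (coverNum Fhat r) / Real.log (1 / r)) := by
    refine ⟨0, ?_⟩
    rw [eventually_map]
    filter_upwards [Ioo_mem_nhdsGT (zero_lt_one' ℝ)] with r hr
    refine div_nonneg (Real.log_natCast_nonneg _) (Real.log_nonneg ?_)
    rw [le_div_iff₀ hr.1]; linarith [hr.2]
  refine liminf_le_of_frequently_le ?_ hbb
  rw [frequently_iff]
  intro U hU
  obtain ⟨s, hs, hsU⟩ := mem_nhdsGT_iff_exists_Ioo_subset.1 hU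
  replace hs : 0 < s := hs
  set D' : ℝ := max 1 (M * (diam Fhat + 4 * C)) with hD'
  have hD1 : 1 ≤ D' := le_max_left _ _
  have hD0 : 0 < D' := by linarith
  -- largeness conditions
  have E1 : ∀ᶠ t : ℝ in atTop, 1 ≤ t := eventually_ge_atTop 1
  have E2 : ∀ᶠ t : ℝ in atTop, D' / t < min b₀ 1 :=
    (tendsto_const_nhds.div_atTop tendsto_id).eventually_lt_const (lt_min hb₀ one_pos)
  have E3 : ∀ᶠ t : ℝ in atTop, C * t ^ (-(ε - δ)) < 1 := by
    have := (tendsto_rpow_neg_atTop (sub_pos.2 hδε)).const_mul C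
    rw [mul_zero] at this
    exact this.eventually_lt_const one_pos
  have E4 : ∀ᶠ t : ℝ in atTop, 3 * C * t ^ (-ε) < min s 1 := by
    have := (tendsto_rpow_neg_atTop hε).const_mul (3 * C)
    rw [mul_zero] at this
    exact this.eventually_lt_const (lt_min hs one_pos)
  have E5 : ∀ᶠ t : ℝ in atTop, Real.log c + α * Real.log (D' / C) + (α + η) * Real.log (3 * C)
      ≤ (η * ε) * Real.log t :=
    (Real.tendsto_log_atTop.const_mul_atTop (by positivity)).eventually_ge_atTop _
  obtain ⟨B, hB⟩ := eventually_atTop.1 (E1.and (E2.and (E3.and (E4.and E5))))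
  obtain ⟨k, hk⟩ := hbtop B
  obtain ⟨h1, h2, h3, h4, h5⟩ := hB (b k) hk
  set t := b k with ht
  have ht0 : 0 < t := by linarith
  set ρ : ℝ := C * t ^ (-ε) with hρ
  have hρ0 : 0 < ρ := by positivity
  have hρC : ρ ≤ C := by
    have : t ^ (-ε) ≤ 1 := Real.rpow_le_one_of_one_le_of_nonpos h1 (by linarith)
    nlinarith
  have h4' : 3 * ρ < min s 1 := by rw [hρ, ← mul_assoc]; exact h4
  have h3ρs : 3 * ρ < s := h4'.trans_le (min_le_left _ _)
  have h3ρ1 : 3 * ρ < 1 := h4'.trans_le (min_le_right _ _)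
  refine ⟨3 * ρ, hsU ⟨by positivity, h3ρs⟩, ?_⟩
  -- approximation
  have happ : ∀ x ∈ Fhat, ∃ y ∈ F, dist x (T k y) < 2 * ρ := by
    intro x hx
    have hbd : BddAbove ((fun x => infDist x (T k '' F)) '' Fhat) :=
      (hFhatc.image (continuous_infDist_pt _)).bddAbove
    have hle : infDist x (T k '' F) ≤ ρ := (le_csSup hbd ⟨x, hx, rfl⟩).trans (hfast k)
    obtain ⟨z, ⟨y, hy, rfl⟩, hz⟩ := (infDist_lt_iff (hFne.image (T k))).1
      (show infDist x (T k '' F) < 2 * ρ by linarith)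
    exact ⟨y, hy, hz⟩
  obtain ⟨x₀, hx₀⟩ := hFhatne
  obtain ⟨y₀, hy₀, hxy₀⟩ := happ x₀ hx₀
  set R := D' / t with hR
  set r := ρ / t with hr
  have hR0 : 0 < R := by positivity
  have hr0 : 0 < r := by positivity
  have hR1 : R ≤ 1 := (h2.trans_le (min_le_right _ _)).le
  have hRb : R ≤ b₀ := (h2.trans_le (min_le_left _ _)).le
  have hrR : r ≤ R ^ (1 + δ) := by
    have e1 : R ^ (1 + δ) = D' ^ (1 + δ) * t ^ (-(1 + δ)) := by
      rw [hR, Real.div_rpow hD0.le ht0.le, Real.rpow_neg ht0.le]; rfl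
    have e2 : r = C * t ^ (-(ε - δ)) * t ^ (-(1 + δ)) := by
      rw [hr, hρ, mul_assoc, ← Real.rpow_add ht0, mul_div_assoc]
      congr 1
      rw [← Real.rpow_sub_one ht0.ne']
      congr 1; ring
    have e3 : 1 ≤ D' ^ (1 + δ) := Real.one_le_rpow hD1 (by linarith)
    rw [e1, e2]
    exact mul_le_mul_of_nonneg_right (h3.le.trans e3) (by positivity)
  have hRR : R ^ (1 + δ) ≤ R := by
    simpa using Real.rpow_le_rpow_of_exponent_ge hR0 hR1 (show (1:ℝ) ≤ 1 + δ by linarith)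
  have hN := hcov r R hr0 hrR hRR hRb
  obtain ⟨S, hScard, hScov⟩ := exists_cover_aux hFc
    (inter_subset_left : F ∩ closedBall y₀ R ⊆ F) hr0
  have hcovhat : coverNum Fhat (3 * ρ) ≤ S.card := by
    classical
    refine (coverNum_le_aux (S.image (T k)) ?_).trans Finset.card_image_le
    intro x hx
    obtain ⟨y, hy, hxy⟩ := happ x hx
    have hyy : dist y y₀ ≤ R := by
      have hd : dist x x₀ ≤ diam Fhat := dist_le_diam_of_mem hFhatc.isBounded hx hx₀
      have hTT : dist (T k y) (T k y₀) ≤ diam Fhat + 4 * C := by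
        have g1 := dist_triangle4 (T k y) x x₀ (T k y₀)
        rw [dist_comm (T k y) x] at g1
        linarith
      have g2 := (hbiLip k y y₀).1
      rw [← dist_eq_norm, ← dist_eq_norm] at g2
      have g3 : t ≤ M * a k := (div_le_iff₀ (ha k)).1 (hM k)
      have hM0 : 0 < M := lt_of_lt_of_le (div_pos ht0 (ha k)) (hM k)
      rw [hR, le_div_iff₀ ht0]
      calc dist y y₀ * t ≤ dist y y₀ * (M * a k) := by gcongr
        _ = M * (a k * dist y y₀) := by ring
        _ ≤ M * (diam Fhat + 4 * C) := by
          exact mul_le_mul_of_nonneg_left (g2.trans hTT) hM0.le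
        _ ≤ D' := le_max_right _ _
    obtain ⟨z, hz, hyz⟩ := mem_iUnion₂.1 (hScov ⟨hy, hyy⟩)
    refine mem_iUnion₂.2 ⟨T k z, Finset.mem_image_of_mem _ hz, ?_⟩
    have g4 := (hbiLip k y z).2
    rw [← dist_eq_norm, ← dist_eq_norm] at g4
    have g5 : t * dist y z ≤ ρ := by
      have : dist y z ≤ ρ / t := hyz
      rw [le_div_iff₀ ht0] at this
      linarith
    rw [mem_closedBall]
    have := dist_triangle x (T k y) (T k z)
    linarith
  have hNN : (coverNum Fhat (3 * ρ) : ℝ) ≤ c * (R / r) ^ α := by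
    refine le_trans ?_ hN
    exact_mod_cast (hcovhat.trans hScard.le).trans (coverNum_le_coverNumLoc hFc hr0 hy₀)
  have hpos : 1 ≤ coverNum Fhat (3 * ρ) := one_le_coverNum hFhatc ⟨x₀, hx₀⟩ (by positivity)
  have hRr : R / r = D' / C * t ^ ε := by
    rw [hR, hr, hρ, Real.rpow_neg ht0.le]
    field_simp
  have hlog : Real.log (coverNum Fhat (3 * ρ)) ≤
      Real.log c + α * (Real.log (D' / C) + ε * Real.log t) := by
    refine (Real.log_le_log (by exact_mod_cast hpos) hNN).trans ?_
    rw [hRr, Real.log_mul hc.ne' (by positivity), Real.log_rpow (by positivity),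
      Real.log_mul (by positivity) (by positivity), Real.log_rpow ht0]
  have hlog3 : Real.log (1 / (3 * ρ)) = ε * Real.log t - Real.log (3 * C) := by
    rw [one_div, Real.log_inv, hρ, ← mul_assoc, Real.log_mul (by positivity) (by positivity),
      Real.log_rpow ht0]
    ring
  have hlpos : 0 < Real.log (1 / (3 * ρ)) := by
    apply Real.log_pos
    rw [lt_div_iff₀ (by positivity)]; linarith
  rw [div_le_iff₀ hlpos, hlog3]
  refine hlog.trans ?_
  linarith
end

section
/- Let real numbers 1 ≤ a ≤ α ≤ u < v ≤ β ≤ b < ∞ be given. Then there exists a compact set E ⊆ [0,1] such that dim_A E = 1/a, dim_qA E = 1/α, \overline{dim}_B E = 1/u, \underline{dim}_B E = 1/v, dim_qL E = 1/β and dim_L E = 1/b. -/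
open Metric Filter Set
open scoped ENNReal

/-- descendants -/
noncomputable def Qs (f : ℕ → ℕ) (m p : ℕ) : ℕ → Finset ℕ
  | 0 => {p}
  | j + 1 => (Qs f m p j).biUnion fun q =>
      if f (m + j + 1) = f (m + j) then {2 * q} else {2 * q, 2 * q + 1}

lemma Qs_card (f : ℕ → ℕ) (hf : ∀ n, f (n + 1) = f n ∨ f (n + 1) = f n + 1) (m p j : ℕ) :
    f m ≤ f (m + j) ∧ (Qs f m p j).card = 2 ^ (f (m + j) - f m) := by
  induction j with
  | zero => simp [Qs]
  | succ j ih =>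
    obtain ⟨ih1, ih2⟩ := ih
    have hle : f m ≤ f (m + (j + 1)) := by
      rcases hf (m + j) with h | h <;> (rw [← add_assoc, h]; omega)
    refine ⟨hle, ?_⟩
    rw [Qs, Finset.card_biUnion]
    · rcases hf (m + j) with h | h
      · simp [h, ih2, ← add_assoc]
      · have h2 : ¬ (f (m + j + 1) = f (m + j)) := by omega
        have h3 : ∀ q : ℕ, ({2 * q, 2 * q + 1} : Finset ℕ).card = 2 := by
          intro q; rw [Finset.card_pair]; omega
        simp only [h2, if_false, h3, Finset.sum_const, ih2, ← add_assoc, smul_eq_mul]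
        rw [h]
        rw [← pow_succ]; congr 1; omega
    · intro x _ y _ hxy
      rw [Function.onFun, Finset.disjoint_left]
      intro z hz hz'
      split_ifs at hz hz' <;> simp at hz hz' <;> omega

lemma Qs_mem_bd (f : ℕ → ℕ) (m p j q : ℕ) (hq : q ∈ Qs f m p j) :
    p * 2 ^ j ≤ q ∧ q + 1 ≤ (p + 1) * 2 ^ j := by
  induction j generalizing q with
  | zero => simp [Qs] at hq; simp [hq]
  | succ j ih =>
    rw [Qs, Finset.mem_biUnion] at hq
    obtain ⟨q', hq', h⟩ := hq
    obtain ⟨h1, h2⟩ := ih q' hq'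
    have : 2 * q' ≤ q ∧ q ≤ 2 * q' + 1 := by
      split_ifs at h <;> simp at h <;> omega
    rw [pow_succ]
    constructor <;> nlinarith

lemma Qs_comp (f : ℕ → ℕ) (m j q : ℕ) :
    q ∈ Qs f 0 0 (m + j) ↔ ∃ p ∈ Qs f 0 0 m, q ∈ Qs f m p j := by
  induction j generalizing q with
  | zero => simp [Qs]
  | succ j ih =>
    rw [← add_assoc, Qs, Finset.mem_biUnion]
    simp only [Qs, Finset.mem_biUnion, ih, zero_add]
    constructor
    · rintro ⟨q', ⟨p, hp, h⟩, h'⟩; exact ⟨p, hp, q', h, h'⟩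
    · rintro ⟨p, hp, q', h, h'⟩; exact ⟨q', ⟨p, hp, h⟩, h'⟩

lemma Qs_zero_child (f : ℕ → ℕ) (n j q : ℕ) (hq : q ∈ Qs f 0 0 n) :
    q * 2 ^ j ∈ Qs f 0 0 (n + j) := by
  induction j with
  | zero => simpa using hq
  | succ j ih =>
    rw [← add_assoc, Qs, Finset.mem_biUnion]
    refine ⟨_, ih, ?_⟩
    have : q * 2 ^ (j + 1) = 2 * (q * 2 ^ j) := by ring
    rw [this]
    split_ifs <;> simp

/-- the set -/
def ES (f : ℕ → ℕ) : Set ℝ :=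
  ⋂ n : ℕ, ⋃ q ∈ Qs f 0 0 n, Set.Icc ((q : ℝ) / 2 ^ n) (((q : ℝ) + 1) / 2 ^ n)

lemma ES_mem {f : ℕ → ℕ} {x : ℝ} (hx : x ∈ ES f) (n : ℕ) :
    ∃ q ∈ Qs f 0 0 n, (q : ℝ) ≤ x * 2 ^ n ∧ x * 2 ^ n ≤ q + 1 := by
  have := Set.mem_iInter.1 hx n
  simp only [Set.mem_iUnion, Set.mem_Icc] at this
  obtain ⟨q, hq, h1, h2⟩ := this
  refine ⟨q, hq, ?_, ?_⟩
  · rwa [div_le_iff₀ (by positivity)] at h1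
  · rwa [le_div_iff₀ (by positivity)] at h2

lemma ES_compact (f : ℕ → ℕ) : ES f ⊆ Set.Icc 0 1 ∧ IsCompact (ES f) := by
  have h : ES f ⊆ Set.Icc 0 1 := by
    intro x hx
    obtain ⟨q, hq, h1, h2⟩ := ES_mem hx 0
    simp [Qs] at hq
    subst hq
    simp at h1 h2
    exact ⟨h1, h2⟩
  refine ⟨h, isCompact_Icc.of_isClosed_subset ?_ h⟩
  refine isClosed_iInter fun n => ?_
  exact Set.Finite.isClosed_biUnion (Finset.finite_toSet _) (fun q _ => isClosed_Icc)

lemma ES_pt (f : ℕ → ℕ) (n q : ℕ) (hq : q ∈ Qs f 0 0 n) : (q : ℝ) / 2 ^ n ∈ ES f := by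
  refine Set.mem_iInter.2 fun k => ?_
  simp only [Set.mem_iUnion, Set.mem_Icc]
  rcases le_total n k with h | h
  · obtain ⟨j, rfl⟩ := Nat.exists_eq_add_of_le h
    refine ⟨_, Qs_zero_child f n j q hq, ?_, ?_⟩
    · push_cast; rw [pow_add, mul_div_mul_right _ _ (by positivity)]
    · push_cast
      rw [div_le_div_iff₀ (by positivity) (by positivity), pow_add]
      have : (0:ℝ) < 2 ^ n := by positivity
      nlinarith
  · obtain ⟨j, rfl⟩ := Nat.exists_eq_add_of_le h
    obtain ⟨p, hp, h⟩ := (Qs_comp f k j q).1 hq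
    obtain ⟨h1, h2⟩ := Qs_mem_bd f k p j q h
    have h1' : (p:ℝ) * 2 ^ j ≤ q := by exact_mod_cast h1
    have h2' : (q:ℝ) + 1 ≤ (p + 1) * 2 ^ j := by exact_mod_cast h2
    have : (0:ℝ) < 2 ^ k := by positivity
    refine ⟨p, hp, ?_, ?_⟩
    · rw [div_le_div_iff₀ (by positivity) (by positivity), pow_add]; nlinarith
    · rw [div_le_div_iff₀ (by positivity) (by positivity), pow_add]; nlinarith

lemma ES_zero_mem (f : ℕ → ℕ) : (0:ℝ) ∈ ES f := by
  have := ES_pt f 0 0 (by simp [Qs])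
  simpa using this

/-- covering by few balls -/
lemma ES_cover (f : ℕ → ℕ) (hf : ∀ n, f (n + 1) = f n ∨ f (n + 1) = f n + 1) (m j : ℕ)
    (r R x : ℝ) (hr : 1 ≤ r * 2 ^ (m + j)) (hR : R * 2 ^ m ≤ 1) (hx : x ∈ ES f) :
    ∃ S : Finset ℝ, S.card ≤ 5 * 2 ^ (f (m + j) - f m) ∧
      ES f ∩ closedBall x R ⊆ ⋃ y ∈ S, closedBall y r := by
  obtain ⟨p0, hp0, h1, h2⟩ := ES_mem hx m
  let T : Finset ℕ := Finset.Icc (p0 - 2) (p0 + 2)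
  refine ⟨(T.biUnion fun p => Qs f m p j).image fun q : ℕ => (q:ℝ) / 2 ^ (m + j), ?_, ?_⟩
  · refine Finset.card_image_le.trans (Finset.card_biUnion_le.trans ?_)
    simp only [(Qs_card f hf m _ j).2, Finset.sum_const, smul_eq_mul]
    gcongr
    simp only [T, Nat.card_Icc]; omega
  · rintro y ⟨hy, hyx⟩
    rw [mem_closedBall, Real.dist_eq, abs_le] at hyx
    obtain ⟨q, hq, h3, h4⟩ := ES_mem hy (m + j)
    obtain ⟨p, hp, hqp⟩ := (Qs_comp f m j q).1 hq
    obtain ⟨h5, h6⟩ := Qs_mem_bd f m p j q hqp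
    have h5' : (p:ℝ) * 2 ^ j ≤ q := by exact_mod_cast h5
    have h6' : (q:ℝ) + 1 ≤ (p + 1) * 2 ^ j := by exact_mod_cast h6
    have hj : (0:ℝ) < 2 ^ j := by positivity
    have hm : (0:ℝ) < 2 ^ m := by positivity
    have e : y * 2 ^ (m + j) = (y * 2 ^ m) * 2 ^ j := by rw [pow_add]; ring
    have h7 : (p:ℝ) ≤ y * 2 ^ m := by
      apply le_of_mul_le_mul_right _ hj; rw [← e]; linarith
    have h8 : y * 2 ^ m ≤ p + 1 := by
      apply le_of_mul_le_mul_right _ hj; rw [← e]; linarith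
    have h9 : y * 2 ^ m - x * 2 ^ m ≤ 1 := by nlinarith
    have h10 : -1 ≤ y * 2 ^ m - x * 2 ^ m := by nlinarith
    have hpT : p ∈ T := by
      have a1 : (p:ℝ) ≤ p0 + 2 := by linarith
      have a2 : (p0:ℝ) ≤ p + 2 := by linarith
      have a1' : p ≤ p0 + 2 := by exact_mod_cast a1
      have a2' : p0 ≤ p + 2 := by exact_mod_cast a2
      simp only [T, Finset.mem_Icc]; omega
    simp only [Set.mem_iUnion]
    refine ⟨(q:ℝ) / 2 ^ (m + j), ?_, ?_⟩
    · exact Finset.mem_image_of_mem _ (Finset.mem_biUnion.2 ⟨p, hpT, hqp⟩)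
    · have hmj : (0:ℝ) < 2 ^ (m + j) := by positivity
      rw [mem_closedBall, Real.dist_eq]
      apply le_of_mul_le_mul_right _ hmj
      rw [← abs_of_pos hmj, ← abs_mul, sub_mul, abs_of_pos hmj, div_mul_cancel₀ _ hmj.ne', abs_le]
      constructor <;> linarith

lemma coverNum_le_of {A : Set ℝ} {r : ℝ} {S : Finset ℝ} {k : ℕ} (hk : S.card ≤ k)
    (h : A ⊆ ⋃ y ∈ S, closedBall y r) : coverNum A r ≤ k :=
  le_trans (Nat.sInf_le (show S.card ∈ {n : ℕ | ∃ S : Finset ℝ, S.card = n ∧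
    A ⊆ ⋃ x ∈ S, closedBall x r} from ⟨S, rfl, h⟩)) hk

lemma ES_bdd (f : ℕ → ℕ) (hf : ∀ n, f (n + 1) = f n ∨ f (n + 1) = f n + 1) (r R : ℝ)
    (hr : 0 < r) (hE : R ≤ 1) : BddAbove {n : ℕ | ∃ x ∈ ES f, n = coverNum (ES f ∩ closedBall x R) r} := by
  obtain ⟨j, hj⟩ := pow_unbounded_of_one_lt (1 / r) (one_lt_two)
  have hj' : 1 ≤ r * 2 ^ (0 + j) := by
    rw [zero_add]; rw [div_lt_iff₀ hr] at hj; linarith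
  refine ⟨5 * 2 ^ (f (0 + j) - f 0), ?_⟩
  rintro n ⟨x, hx, rfl⟩
  obtain ⟨S, hS, h⟩ := ES_cover f hf 0 j r R x hj' (by simpa using hE) hx
  exact coverNum_le_of hS h

lemma ES_upper (f : ℕ → ℕ) (hf : ∀ n, f (n + 1) = f n ∨ f (n + 1) = f n + 1) (m j : ℕ)
    (r R : ℝ) (hr : 1 ≤ r * 2 ^ (m + j)) (hR : R * 2 ^ m ≤ 1) :
    coverNumLoc (ES f) r R ≤ 5 * 2 ^ (f (m + j) - f m) := by
  refine csSup_le' ?_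
  rintro n ⟨x, hx, rfl⟩
  obtain ⟨S, hS, h⟩ := ES_cover f hf m j r R x hr hR hx
  exact coverNum_le_of hS h

lemma ES_lower (f : ℕ → ℕ) (hf : ∀ n, f (n + 1) = f n ∨ f (n + 1) = f n + 1) (m j : ℕ)
    (r R : ℝ) (hr0 : 0 < r) (hr : r * 2 ^ (m + j) ≤ 4) (hR : 1 ≤ R * 2 ^ m) (hR1 : R ≤ 1) :
    2 ^ (f (m + j) - f m) ≤ 9 * coverNumLoc (ES f) r R := by
  have hx := ES_zero_mem f
  have key : 2 ^ (f (m + j) - f m) ≤ 9 * coverNum (ES f ∩ closedBall 0 R) r := by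
    have hne : {n : ℕ | ∃ S : Finset ℝ, S.card = n ∧
        ES f ∩ closedBall 0 R ⊆ ⋃ x ∈ S, closedBall x r}.Nonempty := by
      obtain ⟨i, hi⟩ := pow_unbounded_of_one_lt (1 / r) (one_lt_two)
      have hi' : 1 ≤ r * 2 ^ (0 + i) := by
        rw [zero_add]; rw [div_lt_iff₀ hr0] at hi; linarith
      obtain ⟨S, hS, h⟩ := ES_cover f hf 0 i r R 0 hi' (by simpa using hR1) hx
      exact ⟨_, S, rfl, h⟩
    obtain ⟨S, hS, hcov⟩ := Nat.sInf_mem hne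
    change S.card = coverNum _ _ at hS
    rw [← hS]
    obtain ⟨p, hp, h1, h2⟩ := ES_mem hx m
    have hm : (0:ℝ) < 2 ^ m := by positivity
    have hj : (0:ℝ) < 2 ^ j := by positivity
    have hmj : (0:ℝ) < 2 ^ (m + j) := by positivity
    have hch : ∀ q ∈ Qs f m p j, ∃ y ∈ S, dist ((q:ℝ) / 2 ^ (m + j)) y ≤ r := by
      intro q hq
      obtain ⟨h5, h6⟩ := Qs_mem_bd f m p j q hq
      have h5' : (p:ℝ) * 2 ^ j ≤ q := by exact_mod_cast h5
      have h6' : (q:ℝ) + 1 ≤ (p + 1) * 2 ^ j := by exact_mod_cast h6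
      have hq1 := ES_pt f (m + j) q ((Qs_comp f m j q).2 ⟨p, hp, hq⟩)
      have hq2 : (q:ℝ) / 2 ^ (m + j) ∈ closedBall (0:ℝ) R := by
        rw [mem_closedBall, Real.dist_eq, sub_zero, abs_of_nonneg (by positivity),
          div_le_iff₀ hmj, pow_add]
        have : (p:ℝ) ≤ 0 := by simpa using h1
        nlinarith
      have := hcov ⟨hq1, hq2⟩
      simp only [Set.mem_iUnion] at this
      obtain ⟨y, hy, h⟩ := this
      exact ⟨y, hy, h⟩
    choose! g hg1 hg2 using hch
    rw [← (Qs_card f hf m p j).2]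
    rw [mul_comm]
    rw [mul_comm]
    refine Finset.card_le_mul_card_image_of_maps_to (f := g) hg1 9 ?_
    intro y _
    set T := (Qs f m p j).filter (fun q => g q = y) with hT
    rcases T.eq_empty_or_nonempty with h | h
    · rw [h]; simp
    · have : T ⊆ Finset.Icc (T.min' h) (T.min' h + 8) := by
        intro q hq
        have hq0 := T.min'_mem h
        have hle := T.min'_le q hq
        set q0 := T.min' h
        rw [Finset.mem_Icc]
        refine ⟨hle, ?_⟩
        rw [hT, Finset.mem_filter] at hq hq0
        have a1 := hg2 q hq.1
        have a2 := hg2 q0 hq0.1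
        rw [hq.2] at a1
        rw [hq0.2] at a2
        have a3 := (dist_triangle_right ((q:ℝ) / 2 ^ (m + j)) ((q0:ℝ) / 2 ^ (m + j)) y).trans
          (add_le_add a1 a2)
        rw [Real.dist_eq] at a3
        have a4 := (le_abs_self _).trans a3
        rw [← sub_div, div_le_iff₀ hmj] at a4
        have : (q:ℝ) ≤ q0 + 8 := by nlinarith
        exact_mod_cast this
      refine (Finset.card_le_card this).trans ?_
      rw [Nat.card_Icc]; omega
  refine key.trans ?_
  gcongr
  exact le_csSup (ES_bdd f hf r R hr0 hR1) ⟨0, hx, rfl⟩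

lemma ES_loc_one (f : ℕ → ℕ) (r : ℝ) : coverNumLoc (ES f) r 1 = coverNum (ES f) r := by
  have h : ∀ x ∈ ES f, ES f ∩ closedBall x 1 = ES f := by
    intro x hx
    refine Set.inter_eq_left.2 fun y hy => ?_
    have hx' := (ES_compact f).1 hx
    have hy' := (ES_compact f).1 hy
    rw [mem_closedBall, Real.dist_eq, abs_le]
    constructor <;> linarith [hx'.1, hx'.2, hy'.1, hy'.2]
  have : {n : ℕ | ∃ x ∈ ES f, n = coverNum (ES f ∩ closedBall x 1) r} = {coverNum (ES f) r} := by
    ext n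
    simp only [Set.mem_ofPred_eq, Set.mem_singleton_iff]
    constructor
    · rintro ⟨x, hx, rfl⟩; rw [h x hx]
    · rintro rfl; exact ⟨0, ES_zero_mem f, by rw [h 0 (ES_zero_mem f)]⟩
  rw [coverNumLoc, this, csSup_singleton]

/-- two-sided comparison -/
def Cmp (E : Set ℝ) (F : ℕ → ℝ) (K : ℝ) : Prop :=
  ∀ (m n : ℕ) (r R : ℝ), m ≤ n → 0 < r → R ≤ 1 → 1 ≤ r * 2 ^ n → r * 2 ^ n ≤ 2 →
    R * 2 ^ m ≤ 1 → 1 ≤ 2 * (R * 2 ^ m) →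
    (2:ℝ) ^ (F n - F m) ≤ K * coverNumLoc E r R ∧
      (coverNumLoc E r R : ℝ) ≤ K * (2:ℝ) ^ (F n - F m)

lemma exists_E (F : ℕ → ℝ) (hF0 : F 0 = 0) (hF1 : ∀ n, F n ≤ F (n + 1))
    (hF2 : ∀ n, F (n + 1) ≤ F n + 1) :
    ∃ E : Set ℝ, E ⊆ Set.Icc 0 1 ∧ IsCompact E ∧ Cmp E F 36 ∧
      ∀ r, coverNumLoc E r 1 = coverNum E r := by
  have hmono : Monotone F := monotone_nat_of_le_succ hF1
  have hnn : ∀ n, 0 ≤ F n := fun n => hF0 ▸ hmono (Nat.zero_le n)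
  let f : ℕ → ℕ := fun n => ⌊F n⌋₊
  have hfl : ∀ n, (f n : ℝ) ≤ F n := fun n => Nat.floor_le (hnn n)
  have hfu : ∀ n, F n < f n + 1 := fun n => Nat.lt_floor_add_one _
  have hf : ∀ n, f (n + 1) = f n ∨ f (n + 1) = f n + 1 := by
    intro n
    have a1 : f n ≤ f (n + 1) := Nat.floor_mono (hF1 n)
    have a2 : (f (n + 1) : ℝ) < f n + 2 := by
      linarith [hfl (n + 1), hfu n, hF2 n]
    have a3 : f (n + 1) < f n + 2 := by exact_mod_cast a2
    omega
  have hfm : ∀ m n, m ≤ n → f m ≤ f n := fun m n h => Nat.floor_mono (hmono h)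
  refine ⟨ES f, (ES_compact f).1, (ES_compact f).2, ?_, ES_loc_one f⟩
  intro m n r R hmn hr0 hR1 hr1 hr2 hRa hRb
  constructor
  · rcases hmn.eq_or_lt with rfl | hlt
    · have := ES_lower f hf (m + 1) 0 r R hr0 (by rw [add_zero, pow_succ]; linarith)
        (by rw [pow_succ]; linarith) hR1
      have : (1:ℝ) ≤ 9 * coverNumLoc (ES f) r R := by
        simp only [add_zero, Nat.sub_self, pow_zero] at this
        exact_mod_cast this
      simp only [sub_self, Real.rpow_zero]
      linarith
    · obtain ⟨j, rfl⟩ : ∃ j, n = m + 1 + j := ⟨n - (m + 1), by omega⟩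
      have := ES_lower f hf (m + 1) j r R hr0 (by linarith) (by rw [pow_succ]; linarith) hR1
      have h2 : (2:ℝ) ^ (f (m + 1 + j) - f (m + 1)) ≤ 9 * coverNumLoc (ES f) r R := by
        exact_mod_cast this
      have hle := hfm (m + 1) (m + 1 + j) (by omega)
      have h3 : (2:ℝ) ^ (F (m + 1 + j) - F m) ≤
          (2:ℝ) ^ ((f (m + 1 + j) - f (m + 1) : ℕ) + 2 : ℝ) := by
        apply Real.rpow_le_rpow_of_exponent_le (by norm_num)
        rw [Nat.cast_sub hle]
        linarith [hfu (m + 1 + j), hfl (m + 1), hF2 m]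
      rw [Real.rpow_add (by norm_num), Real.rpow_natCast] at h3
      have h4 : (2:ℝ) ^ (2:ℝ) = 4 := by norm_num
      rw [h4] at h3
      linarith
  · obtain ⟨j, rfl⟩ := Nat.exists_eq_add_of_le hmn
    have := ES_upper f hf m j r R hr1 hRa
    have h2 : (coverNumLoc (ES f) r R : ℝ) ≤ 5 * (2:ℝ) ^ (f (m + j) - f m) := by
      exact_mod_cast this
    have hle := hfm m (m + j) (by omega)
    have h3 : (2:ℝ) ^ ((f (m + j) - f m : ℕ) : ℝ) ≤ (2:ℝ) ^ (F (m + j) - F m + 1) := by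
      apply Real.rpow_le_rpow_of_exponent_le (by norm_num)
      rw [Nat.cast_sub hle]
      linarith [hfl (m + j), hfu m]
    rw [Real.rpow_add (by norm_num), Real.rpow_natCast, Real.rpow_one] at h3
    have : (0:ℝ) < (2:ℝ) ^ (F (m + j) - F m) := by positivity
    linarith

lemma exists_dyadic (x : ℝ) (hx0 : 0 < x) (hx1 : x ≤ 1) :
    ∃ m : ℕ, x * 2 ^ m ≤ 1 ∧ 1 < 2 * (x * 2 ^ m) := by
  obtain ⟨n, h1, h2⟩ := exists_nat_pow_near_of_lt_one hx0 hx1 (y := (1/2:ℝ)) (by norm_num) (by norm_num)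
  refine ⟨n, ?_, ?_⟩
  · rw [one_div, inv_pow] at h2
    exact (le_div_iff₀ (by positivity)).1 (by simpa using h2)
  · rw [one_div, inv_pow, inv_lt_iff_one_lt_mul₀ (by positivity), pow_succ] at h1
    linarith

lemma exists_dyadic' (x : ℝ) (hx0 : 0 < x) (hx1 : x ≤ 1) :
    ∃ m : ℕ, 1 ≤ x * 2 ^ m ∧ x * 2 ^ m < 2 := by
  obtain ⟨m, h1, h2⟩ := exists_dyadic x hx0 hx1
  rcases h1.eq_or_lt with h | h
  · exact ⟨m, by linarith, by linarith⟩
  · exact ⟨m + 1, by rw [pow_succ]; linarith, by rw [pow_succ]; linarith⟩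

/-- scales -/
lemma exists_scales (r R δ : ℝ) (hδ : 0 ≤ δ) (hr : 0 < r) (h1 : r ≤ R ^ (1 + δ))
    (h2 : R ^ (1 + δ) ≤ R) (h3 : R ≤ 1) :
    ∃ m n : ℕ, (1 + δ) * m ≤ n ∧ m ≤ n ∧ 1 ≤ r * 2 ^ n ∧ r * 2 ^ n ≤ 2 ∧ R * 2 ^ m ≤ 1 ∧
      1 ≤ 2 * (R * 2 ^ m) ∧ R / r ≤ (2:ℝ) ^ ((n:ℝ) - m) ∧ (2:ℝ) ^ ((n:ℝ) - m) ≤ 4 * (R / r) := by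
  have hR : 0 < R := by linarith
  obtain ⟨m, a1, a2⟩ := exists_dyadic R hR h3
  obtain ⟨n, b1, b2⟩ := exists_dyadic' r hr (by linarith)
  have hmn : (1 + δ) * m ≤ n := by
    have hRle : R ≤ (2:ℝ) ^ (-(m:ℝ)) := by
      rw [Real.rpow_neg (by norm_num), Real.rpow_natCast, ← one_div, le_div_iff₀ (by positivity)]
      exact a1
    have hrge : (2:ℝ) ^ (-(n:ℝ)) ≤ r := by
      rw [Real.rpow_neg (by norm_num), Real.rpow_natCast, ← one_div, div_le_iff₀ (by positivity)]
      exact b1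
    have : (2:ℝ) ^ (-(n:ℝ)) ≤ (2:ℝ) ^ (-(m:ℝ) * (1 + δ)) := by
      rw [Real.rpow_mul (by norm_num)]
      exact hrge.trans (h1.trans (Real.rpow_le_rpow hR.le hRle (by linarith)))
    rw [Real.rpow_le_rpow_left_iff (by norm_num)] at this
    linarith
  have hmn' : m ≤ n := by
    have : (m:ℝ) ≤ n := by nlinarith [Nat.cast_nonneg (α := ℝ) m]
    exact_mod_cast this
  have hm : (0:ℝ) < 2 ^ m := by positivity
  have hn : (0:ℝ) < 2 ^ n := by positivity
  refine ⟨m, n, hmn, hmn', b1, b2.le, a1, a2.le, ?_, ?_⟩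
  · rw [Real.rpow_sub (by norm_num), Real.rpow_natCast, Real.rpow_natCast,
      div_le_div_iff₀ hr hm]
    nlinarith
  · rw [Real.rpow_sub (by norm_num), Real.rpow_natCast, Real.rpow_natCast,
      ← mul_div_assoc, div_le_div_iff₀ hm hr]
    nlinarith

lemma pow_scale (m n : ℕ) (δ : ℝ) (hδ : 0 ≤ δ) (h : (1 + δ) * m ≤ n) :
    (1 / 2 ^ n : ℝ) ≤ (1 / 2 ^ m : ℝ) ^ (1 + δ) ∧ (1 / 2 ^ m : ℝ) ^ (1 + δ) ≤ 1 / 2 ^ m ∧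
    ((1 / 2 ^ m : ℝ) / (1 / 2 ^ n)) = (2:ℝ) ^ ((n:ℝ) - m) := by
  have e : ∀ k : ℕ, (1 / 2 ^ k : ℝ) = (2:ℝ) ^ (-(k:ℝ)) := by
    intro k; rw [Real.rpow_neg (by norm_num), Real.rpow_natCast, one_div]
  have hm : (0:ℝ) ≤ m := by positivity
  rw [e, e]
  refine ⟨?_, ?_, ?_⟩
  · rw [← Real.rpow_mul (by norm_num)]
    apply Real.rpow_le_rpow_of_exponent_le (by norm_num); linarith
  · rw [← Real.rpow_mul (by norm_num)]
    apply Real.rpow_le_rpow_of_exponent_le (by norm_num); nlinarith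
  · rw [← Real.rpow_sub (by norm_num)]; congr 1; ring

section
variable {E : Set ℝ} {F : ℕ → ℝ} {K : ℝ}

lemma hUpper_iff (hK : 0 < K) (hC : Cmp E F K) (δ s : ℝ) (hδ : 0 ≤ δ) (hs : 0 ≤ s) :
    (∃ b c : ℝ, 0 < b ∧ 0 < c ∧ ∀ r R : ℝ,
      0 < r → r ≤ R ^ (1 + δ) → R ^ (1 + δ) ≤ R → R ≤ b →
      (coverNumLoc E r R : ℝ) ≤ c * (R / r) ^ s) ↔
    ∃ (m0 : ℕ) (C : ℝ), ∀ m n : ℕ, m0 ≤ m → m ≤ n → (1 + δ) * m ≤ n →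
      F n - F m ≤ s * (n - m) + C := by
  constructor
  · rintro ⟨b, c, hb, hc, h⟩
    obtain ⟨m0, hm0⟩ := exists_pow_lt_of_lt_one hb (show (1/2:ℝ) < 1 by norm_num)
    refine ⟨m0, Real.logb 2 (K * c), fun m n hm hmn hδmn => ?_⟩
    obtain ⟨p1, p2, p3⟩ := pow_scale m n δ hδ hδmn
    have hRb : (1 / 2 ^ m : ℝ) ≤ b := by
      refine le_trans ?_ hm0.le
      rw [one_div_pow]
      exact one_div_le_one_div_of_le (by positivity) (pow_le_pow_right₀ (by norm_num) hm)
    have hR1 : (1 / 2 ^ m : ℝ) ≤ 1 := by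
      rw [div_le_one (by positivity)]; exact one_le_pow₀ (by norm_num)
    have a1 := h (1 / 2 ^ n) (1 / 2 ^ m) (by positivity) p1 p2 hRb
    have e1 : (1 / 2 ^ n : ℝ) * 2 ^ n = 1 := by field_simp
    have e2 : (1 / 2 ^ m : ℝ) * 2 ^ m = 1 := by field_simp
    have a2 := (hC m n (1 / 2 ^ n) (1 / 2 ^ m) hmn (by positivity) hR1 (by rw [e1])
      (by rw [e1]; norm_num) (by rw [e2]) (by rw [e2]; norm_num)).1
    rw [p3, ← Real.rpow_mul (by norm_num)] at a1
    have a3 : (2:ℝ) ^ (F n - F m) ≤ (2:ℝ) ^ (s * (n - m) + Real.logb 2 (K * c)) := by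
      rw [Real.rpow_add (by norm_num), Real.rpow_logb (by norm_num) (by norm_num) (by positivity)]
      calc _ ≤ _ := a2
        _ ≤ K * (c * 2 ^ (((n:ℝ) - m) * s)) := by gcongr
        _ = _ := by rw [mul_comm s]; ring
    exact (Real.rpow_le_rpow_left_iff (by norm_num)).1 a3
  · rintro ⟨m0, C, h⟩
    refine ⟨1 / 2 ^ (m0 + 1), K * 2 ^ C * 4 ^ s, by positivity, by positivity, ?_⟩
    intro r R hr h1 h2 h3
    have hR1 : R ≤ 1 := by
      refine h3.trans ?_
      rw [div_le_one (by positivity)]; exact one_le_pow₀ (by norm_num)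
    obtain ⟨m, n, hδmn, hmn, b1, b2, b3, b4, b5, b6⟩ := exists_scales r R δ hδ hr h1 h2 hR1
    have hm : m0 ≤ m := by
      have : (2:ℝ) ^ m0 ≤ 2 ^ m := by
        rw [le_div_iff₀ (by positivity), pow_succ] at h3
        have : (0:ℝ) < 2 ^ m := by positivity
        have : (0:ℝ) < 2 ^ m0 := by positivity
        nlinarith
      exact (pow_le_pow_iff_right₀ (by norm_num)).1 this
    have a1 := (hC m n r R hmn hr hR1 b1 b2 b3 b4).2
    have hRr : 0 < R / r := div_pos (by linarith) hr
    calc (coverNumLoc E r R : ℝ) ≤ _ := a1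
      _ ≤ K * (2:ℝ) ^ ((n - m) * s + C) := by
          gcongr
          · norm_num
          · linarith [h m n hm hmn hδmn]
      _ = K * 2 ^ C * ((2:ℝ) ^ ((n:ℝ) - m)) ^ s := by
          rw [Real.rpow_add (by norm_num), ← Real.rpow_mul (by norm_num)]; ring
      _ ≤ K * 2 ^ C * (4 * (R / r)) ^ s := by gcongr
      _ = _ := by rw [Real.mul_rpow (by norm_num) hRr.le]; ring

lemma hLower_iff (hK : 0 < K) (hC : Cmp E F K) (δ s : ℝ) (hδ : 0 ≤ δ) (hs : 0 ≤ s) :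
    (∃ b c : ℝ, 0 < b ∧ 0 < c ∧ ∀ r R : ℝ,
      0 < r → r ≤ R ^ (1 + δ) → R ^ (1 + δ) ≤ R → R ≤ b →
      c * (R / r) ^ s ≤ (coverNumLoc E r R : ℝ)) ↔
    ∃ (m0 : ℕ) (C : ℝ), ∀ m n : ℕ, m0 ≤ m → m ≤ n → (1 + δ) * m ≤ n →
      s * (n - m) ≤ F n - F m + C := by
  constructor
  · rintro ⟨b, c, hb, hc, h⟩
    obtain ⟨m0, hm0⟩ := exists_pow_lt_of_lt_one hb (show (1/2:ℝ) < 1 by norm_num)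
    refine ⟨m0, Real.logb 2 (K / c), fun m n hm hmn hδmn => ?_⟩
    obtain ⟨p1, p2, p3⟩ := pow_scale m n δ hδ hδmn
    have hRb : (1 / 2 ^ m : ℝ) ≤ b := by
      refine le_trans ?_ hm0.le
      rw [one_div_pow]
      exact one_div_le_one_div_of_le (by positivity) (pow_le_pow_right₀ (by norm_num) hm)
    have hR1 : (1 / 2 ^ m : ℝ) ≤ 1 := by
      rw [div_le_one (by positivity)]; exact one_le_pow₀ (by norm_num)
    have a1 := h (1 / 2 ^ n) (1 / 2 ^ m) (by positivity) p1 p2 hRb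
    have e1 : (1 / 2 ^ n : ℝ) * 2 ^ n = 1 := by field_simp
    have e2 : (1 / 2 ^ m : ℝ) * 2 ^ m = 1 := by field_simp
    have a2 := (hC m n (1 / 2 ^ n) (1 / 2 ^ m) hmn (by positivity) hR1 (by rw [e1])
      (by rw [e1]; norm_num) (by rw [e2]) (by rw [e2]; norm_num)).2
    rw [p3, ← Real.rpow_mul (by norm_num)] at a1
    have a3 : (2:ℝ) ^ (s * (n - m)) ≤ (2:ℝ) ^ (F n - F m + Real.logb 2 (K / c)) := by
      rw [Real.rpow_add (by norm_num), Real.rpow_logb (by norm_num) (by norm_num) (by positivity),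
        ← mul_div_assoc, le_div_iff₀ hc, mul_comm s]
      linarith
    exact (Real.rpow_le_rpow_left_iff (by norm_num)).1 a3
  · rintro ⟨m0, C, h⟩
    refine ⟨1 / 2 ^ (m0 + 1), 1 / (K * 2 ^ C), by positivity, by positivity, ?_⟩
    intro r R hr h1 h2 h3
    have hR1 : R ≤ 1 := by
      refine h3.trans ?_
      rw [div_le_one (by positivity)]; exact one_le_pow₀ (by norm_num)
    obtain ⟨m, n, hδmn, hmn, b1, b2, b3, b4, b5, b6⟩ := exists_scales r R δ hδ hr h1 h2 hR1
    have hm : m0 ≤ m := by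
      have : (2:ℝ) ^ m0 ≤ 2 ^ m := by
        rw [le_div_iff₀ (by positivity), pow_succ] at h3
        have : (0:ℝ) < 2 ^ m := by positivity
        have : (0:ℝ) < 2 ^ m0 := by positivity
        nlinarith
      exact (pow_le_pow_iff_right₀ (by norm_num)).1 this
    have a1 := (hC m n r R hmn hr hR1 b1 b2 b3 b4).1
    have hRr : 0 < R / r := div_pos (by linarith) hr
    have hc2 : (0:ℝ) < 2 ^ C := by positivity
    rw [one_div_mul_eq_div, div_le_iff₀ (by positivity)]
    calc (R / r) ^ s ≤ ((2:ℝ) ^ ((n:ℝ) - m)) ^ s := by gcongr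
      _ = (2:ℝ) ^ (s * (n - m)) := by rw [← Real.rpow_mul (by norm_num), mul_comm]
      _ ≤ (2:ℝ) ^ (F n - F m + C) := by
          apply Real.rpow_le_rpow_of_exponent_le (by norm_num) (h m n hm hmn hδmn)
      _ = (2:ℝ) ^ (F n - F m) * 2 ^ C := by rw [Real.rpow_add (by norm_num)]
      _ ≤ K * coverNumLoc E r R * 2 ^ C := by gcongr
      _ = _ := by ring

end

/-- stage index -/
def Kst (i : ℕ) : ℕ := Nat.sqrt (Nat.log 2 i)

/-- stage start -/
def Tst (k : ℕ) : ℕ := 2 ^ (k ^ 2)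

lemma Tst_pos (k : ℕ) : 1 ≤ Tst k := Nat.one_le_two_pow

lemma Tst_gt (k : ℕ) : k < Tst k := by
  have h : k ≤ k ^ 2 := Nat.le_self_pow (by norm_num) k
  exact (Nat.lt_two_pow_self).trans_le (Nat.pow_le_pow_right (by norm_num) h)

lemma Tst_succ (k : ℕ) : Tst (k + 1) = Tst k * 2 ^ (2 * k + 1) := by
  rw [Tst, Tst, ← pow_add]; congr 1; ring

lemma Tst_succ2 (k : ℕ) : 2 * Tst k ≤ Tst (k + 1) := by
  rw [Tst_succ, mul_comm, pow_succ]
  have : 1 ≤ 2 ^ (2 * k) := Nat.one_le_two_pow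
  have := Tst_pos k
  nlinarith

lemma Kst_eq {k i : ℕ} (h1 : Tst k ≤ i) (h2 : i < Tst (k + 1)) : Kst i = k := by
  have hi : i ≠ 0 := by have := Tst_pos k; omega
  have a1 : k ^ 2 ≤ Nat.log 2 i := by
    exact (Nat.le_log_iff_pow_le (by norm_num) hi).2 h1
  have a2 : Nat.log 2 i < (k + 1) ^ 2 := by
    exact (Nat.log_lt_iff_lt_pow (by norm_num) hi).2 h2
  rw [Kst]
  apply le_antisymm
  · exact Nat.lt_succ_iff.1 (Nat.sqrt_lt'.2 a2)
  · exact Nat.le_sqrt'.2 a1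

lemma stage_exists (n : ℕ) (hn : 1 ≤ n) : ∃ k, Tst k ≤ n ∧ n < Tst (k + 1) := by
  refine ⟨Kst n, ?_, ?_⟩
  · rw [Tst]
    exact (Nat.le_log_iff_pow_le (by norm_num) (by omega)).1 (Nat.sqrt_le' _)
  · rw [Tst]
    exact (Nat.log_lt_iff_lt_pow (by norm_num) (by omega)).1 (Nat.lt_succ_sqrt' _)

lemma Tst_mono : Monotone Tst := by
  refine monotone_nat_of_le_succ fun k => ?_
  have := Tst_succ2 k; omega

lemma Tst_small (ε : ℝ) (hε : 0 < ε) :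
    ∃ j0, ∀ j ≥ j0, 2 * (Tst j : ℝ) + 2 * j + 4 ≤ ε * Tst (j + 1) := by
  obtain ⟨j0, hj0⟩ := pow_unbounded_of_one_lt (8 / ε) (one_lt_two (α := ℝ))
  refine ⟨j0, fun j hj => ?_⟩
  have h1 : (j:ℝ) + 1 ≤ Tst j := by exact_mod_cast Tst_gt j
  have h2 : (1:ℝ) ≤ Tst j := by exact_mod_cast Tst_pos j
  have h3 : (2:ℝ) ^ j0 ≤ 2 ^ (2 * j + 1) := pow_le_pow_right₀ (by norm_num) (by omega)
  rw [Tst_succ]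
  push_cast
  rw [div_lt_iff₀ hε] at hj0
  have h4 : 8 ≤ ε * 2 ^ (2 * j + 1) := by nlinarith
  nlinarith

/-- density -/
noncomputable def rho (e : ℕ) (A Q U V q L η : ℝ) (i : ℕ) : ℝ :=
  if (Kst i + e) % 2 = 0 then
    (if i < Tst (Kst i) + Kst i then A else if (i:ℝ) < (1 + η) * Tst (Kst i) then Q else U)
  else
    (if i < Tst (Kst i) + Kst i then L else if (i:ℝ) < (1 + η) * Tst (Kst i) then q else V)

/-- cumulative -/
noncomputable def FF (e : ℕ) (A Q U V q L η : ℝ) (n : ℕ) : ℝ :=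
  ∑ i ∈ Finset.range n, rho e A Q U V q L η i

lemma FF_flip (e : ℕ) (A Q U V q L η : ℝ) (n : ℕ) :
    FF (e + 1) (1 - L) (1 - q) (1 - V) (1 - U) (1 - Q) (1 - A) η n
      = n - FF e A Q U V q L η n := by
  have : ∀ i, rho (e + 1) (1 - L) (1 - q) (1 - V) (1 - U) (1 - Q) (1 - A) η i
      = 1 - rho e A Q U V q L η i := by
    intro i
    unfold rho
    by_cases h : (Kst i + e) % 2 = 0
    · have h' : ¬ (Kst i + (e + 1)) % 2 = 0 := by omega
      simp only [h, h', if_true, if_false]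
      split_ifs <;> ring
    · have h' : (Kst i + (e + 1)) % 2 = 0 := by omega
      simp only [h, h', if_true, if_false]
      split_ifs <;> ring
  simp [FF, this]

lemma sum_le_G (g G : ℕ → ℝ) (m n : ℕ) (hmn : m ≤ n)
    (h : ∀ i, m ≤ i → i < n → g i ≤ G (i + 1) - G i) :
    ∑ i ∈ Finset.range n, g i - ∑ i ∈ Finset.range m, g i ≤ G n - G m := by
  induction n, hmn using Nat.le_induction with
  | base => simp
  | succ n hmn ih =>
    rw [Finset.sum_range_succ]
    have := ih fun i h1 h2 => h i h1 (by omega)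
    have := h n hmn (by omega)
    linarith

lemma sum_ge_G (g G : ℕ → ℝ) (m n : ℕ) (hmn : m ≤ n)
    (h : ∀ i, m ≤ i → i < n → G (i + 1) - G i ≤ g i) :
    G n - G m ≤ ∑ i ∈ Finset.range n, g i - ∑ i ∈ Finset.range m, g i := by
  have := sum_le_G (fun i => - g i) (fun i => - G i) m n hmn
    (fun i h1 h2 => by have := h i h1 h2; linarith)
  simp only [Finset.sum_neg_distrib] at this
  linarith

section
variable (e : ℕ) (A Q U V q L η : ℝ)

structure Par (A Q U V q L η : ℝ) : Prop where
  hA : A ≤ 1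
  hQ : Q ≤ A
  hU : U ≤ Q
  hV : V < U
  hq : q ≤ V
  hL : L ≤ q
  h0 : 0 ≤ L
  e0 : 0 < η
  e1 : η ≤ 1
  e2 : η ≤ U - V

lemma rho_bd (hp : Par A Q U V q L η) (i : ℕ) :
    L ≤ rho e A Q U V q L η i ∧ rho e A Q U V q L η i ≤ A := by
  obtain ⟨hA, hQ, hU, hV, hq, hL, h0, e0, e1, e2⟩ := hp
  unfold rho
  split_ifs <;> constructor <;> linarith

lemma FF_P1 (hp : Par A Q U V q L η) (m n : ℕ) (h : m ≤ n) :
    FF e A Q U V q L η n - FF e A Q U V q L η m ≤ A * (n - m) := by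
  have := sum_le_G (rho e A Q U V q L η) (fun i => A * i) m n h (fun i _ _ => by
    have := (rho_bd e A Q U V q L η hp i).2
    push_cast; linarith)
  unfold FF; linarith

lemma FF_P1' (hp : Par A Q U V q L η) (m n : ℕ) (h : m ≤ n) :
    L * (n - m) ≤ FF e A Q U V q L η n - FF e A Q U V q L η m := by
  have := sum_ge_G (rho e A Q U V q L η) (fun i => L * i) m n h (fun i _ _ => by
    have := (rho_bd e A Q U V q L η hp i).1
    push_cast; linarith)
  unfold FF; linarith

lemma exists_par (k0 : ℕ) : ∃ k ≥ k0, (k + e) % 2 = 0 := by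
  by_cases h : (k0 + e) % 2 = 0
  · exact ⟨k0, le_rfl, h⟩
  · exact ⟨k0 + 1, by omega, by omega⟩

lemma FF_P2 (l m0 : ℕ) :
    ∃ m ≥ m0, A * l ≤ FF e A Q U V q L η (m + l) - FF e A Q U V q L η m := by
  obtain ⟨k, hk, hpar⟩ := exists_par e (m0 + l)
  have hT := Tst_gt k
  refine ⟨Tst k, by omega, ?_⟩
  have := sum_ge_G (rho e A Q U V q L η) (fun i => A * i) (Tst k) (Tst k + l) (by omega)
    (fun i h1 h2 => by
      have hK : Kst i = k := Kst_eq h1 (by have := Tst_succ2 k; omega)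
      have : i < Tst k + k := by omega
      simp only [rho, hK, hpar, this, if_true]
      push_cast; linarith)
  unfold FF; push_cast at this ⊢; linarith

lemma FF_P3_stage (hp : Par A Q U V q L η) (j m n : ℕ) (hm : m ≤ n) (h1 : Tst (j + 1) ≤ n)
    (h2 : n ≤ Tst (j + 2)) :
    FF e A Q U V q L η n - FF e A Q U V q L η m ≤ Q * (n - m) + (Tst j + 2 * j + 1) := by
  obtain ⟨hA, hQ, hU, hV, hq, hL, h0, e0, e1, e2⟩ := hp
  let s : ℕ → ℝ := fun i => if i < Tst (Kst i) + Kst i then 1 else 0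
  let S : ℕ → ℝ := fun n => ∑ i ∈ Finset.range n, s i
  have hs0 : ∀ i, 0 ≤ s i := fun i => by simp only [s]; split_ifs <;> norm_num
  have hs1 : ∀ i, s i ≤ 1 := fun i => by simp only [s]; split_ifs <;> norm_num
  have hst : ∀ k n, Tst k ≤ n → n ≤ Tst (k + 1) → S n ≤ S (Tst k) + k := by
    intro k n h1 h2
    have := sum_le_G s (fun i => (min i (Tst k + k) : ℕ)) (Tst k) n h1 (fun i h3 h4 => by
      have hK : Kst i = k := Kst_eq h3 (by omega)
      simp only [s, hK]
      split_ifs with h5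
      · rw [min_eq_left (by omega), min_eq_left (by omega)]; push_cast; linarith
      · rw [min_eq_right (by omega), min_eq_right (by omega)]; simp)
    have h6 : ((min n (Tst k + k) : ℕ) : ℝ) ≤ Tst k + k := by exact_mod_cast min_le_right _ _
    rw [min_eq_left (a := Tst k) (by omega)] at this
    simp only [S]; linarith
  have b1 := hst (j + 1) n h1 h2
  have b2 := hst j (Tst (j + 1)) (Tst_mono (by omega)) le_rfl
  have b3 : S (Tst j) ≤ Tst j := by
    refine (Finset.sum_le_sum fun i _ => hs1 i).trans ?_
    simp
  have b4 : 0 ≤ S m := Finset.sum_nonneg fun i _ => hs0 i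
  have := sum_le_G (rho e A Q U V q L η) (fun i => Q * i + S i) m n hm (fun i h3 h4 => by
    simp only [S, Finset.sum_range_succ]
    push_cast
    simp only [rho, s]
    split_ifs <;> linarith)
  unfold FF; push_cast at *; linarith

lemma FF_P3 (hp : Par A Q U V q L η) (ε : ℝ) (hε : 0 < ε) : ∃ n0 : ℕ, ∀ n ≥ n0, ∀ m ≤ n,
    FF e A Q U V q L η n - FF e A Q U V q L η m ≤ Q * (n - m) + ε * n := by
  obtain ⟨j0, hj0⟩ := Tst_small ε hε
  refine ⟨Tst (j0 + 1), fun n hn m hm => ?_⟩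
  obtain ⟨k, hk1, hk2⟩ := stage_exists n (by have := Tst_pos (j0 + 1); omega)
  have hk : j0 + 1 ≤ k := by
    by_contra h
    have := Tst_mono (show k + 1 ≤ j0 + 1 by omega)
    omega
  obtain ⟨j, rfl⟩ : ∃ j, k = j + 1 := ⟨k - 1, by omega⟩
  have h1 := FF_P3_stage e A Q U V q L η hp j m n hm hk1 hk2.le
  have h2 := hj0 j (by omega)
  have h3 : (Tst (j + 1) : ℝ) ≤ n := by exact_mod_cast hk1
  have h4 : (0:ℝ) ≤ Tst j := by positivity
  nlinarith

lemma FF_P4 (hp : Par A Q U V q L η) (m0 : ℕ) : ∃ m ≥ m0, ∃ n : ℕ, (1 + η) * m ≤ n ∧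
    Q * (n - m) - 1 ≤ FF e A Q U V q L η n - FF e A Q U V q L η m := by
  obtain ⟨k, hk, hpar⟩ := exists_par e m0
  have hT := Tst_gt k
  have hT2 := Tst_succ2 k
  have hT' : (0:ℝ) < Tst k := by exact_mod_cast Tst_pos k
  obtain ⟨hA, hQ, hU, hV, hq, hL, h0, e0, e1, e2⟩ := hp
  have hle : ⌈(1 + η) * (Tst k : ℝ)⌉₊ ≤ 2 * Tst k := by
    refine Nat.ceil_le.2 ?_
    push_cast; nlinarith
  have hge : Tst k ≤ ⌈(1 + η) * (Tst k : ℝ)⌉₊ := by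
    have := Nat.le_ceil ((1 + η) * (Tst k : ℝ))
    have h : (Tst k : ℝ) ≤ ⌈(1 + η) * (Tst k : ℝ)⌉₊ := by nlinarith
    exact_mod_cast h
  refine ⟨Tst k, by omega, ⌈(1 + η) * (Tst k : ℝ)⌉₊, Nat.le_ceil _, ?_⟩
  have := sum_ge_G (rho e A Q U V q L η) (fun i => Q * i) (Tst k) _ hge
    (fun i h1 h2 => by
      have hK : Kst i = k := Kst_eq h1 (by omega)
      have h3 : (i:ℝ) < (1 + η) * Tst k := Nat.lt_ceil.1 h2
      simp only [rho, hK, hpar, h3, if_true]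
      push_cast; split_ifs <;> linarith)
  unfold FF; linarith

lemma FF_nonneg_le (hp : Par A Q U V q L η) (n : ℕ) :
    0 ≤ FF e A Q U V q L η n ∧ FF e A Q U V q L η n ≤ n := by
  have h1 := FF_P1 e A Q U V q L η hp 0 n (by omega)
  have h2 := FF_P1' e A Q U V q L η hp 0 n (by omega)
  have h3 : FF e A Q U V q L η 0 = 0 := by simp [FF]
  rw [h3] at h1 h2
  have hA := hp.hA
  have h0 := hp.h0
  have hn : (0:ℝ) ≤ n := by positivity
  push_cast at h1 h2
  constructor <;> nlinarith

lemma FF_even_stage (hp : Par A Q U V q L η) (k n : ℕ) (hpar : (k + e) % 2 = 0)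
    (h1 : Tst k ≤ n) (h2 : n ≤ Tst (k + 1)) :
    FF e A Q U V q L η n ≤ FF e A Q U V q L η (Tst k) + U * (n - Tst k) + k + 1 + η * Tst k := by
  obtain ⟨hA, hQ, hU, hV, hq, hL, h0, e0, e1, e2⟩ := hp
  have hT' : (0:ℝ) < Tst k := by exact_mod_cast Tst_pos k
  have := sum_le_G (rho e A Q U V q L η) (fun i => U * i + min (i:ℝ) (Tst k + k : ℝ) +
      min (i:ℝ) ((1 + η) * Tst k + 1)) (Tst k) n h1 (fun i h3 h4 => by
      have hK : Kst i = k := Kst_eq h3 (by omega)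
      have m1 : min (i:ℝ) (Tst k + k : ℝ) ≤ min ((i + 1 : ℕ):ℝ) (Tst k + k : ℝ) :=
        min_le_min_right _ (by push_cast; linarith)
      have m2 : min (i:ℝ) ((1 + η) * Tst k + 1) ≤ min ((i + 1 : ℕ):ℝ) ((1 + η) * Tst k + 1) :=
        min_le_min_right _ (by push_cast; linarith)
      simp only [rho, hK, hpar, if_true]
      split_ifs with h5 h6
      · have h7 : ((i + 1 : ℕ):ℝ) ≤ Tst k + k := by exact_mod_cast h5
        rw [min_eq_left h7, min_eq_left (a := (i:ℝ)) (b := (Tst k + k : ℝ)) (by push_cast at h7; linarith)]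
        push_cast at *; linarith
      · have h7 : ((i + 1 : ℕ):ℝ) ≤ (1 + η) * Tst k + 1 := by push_cast; linarith
        rw [min_eq_left h7, min_eq_left (a := (i:ℝ)) (b := (1 + η) * Tst k + 1) (by linarith)]
        push_cast at *; linarith
      · push_cast at *; linarith)
  have a1 : min (n:ℝ) (Tst k + k : ℝ) ≤ Tst k + k := min_le_right _ _
  have a2 : min (n:ℝ) ((1 + η) * Tst k + 1) ≤ (1 + η) * Tst k + 1 := min_le_right _ _
  rw [min_eq_left (a := (Tst k : ℝ)) (b := (Tst k + k : ℝ)) (by linarith [Nat.cast_nonneg (α := ℝ) k]),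
    min_eq_left (a := (Tst k : ℝ)) (b := (1 + η) * Tst k + 1) (by nlinarith)] at this
  unfold FF; linarith

lemma FF_odd_stage (hp : Par A Q U V q L η) (k n : ℕ) (hpar : ¬ (k + e) % 2 = 0)
    (h1 : Tst k ≤ n) (h2 : n ≤ Tst (k + 1)) :
    FF e A Q U V q L η n ≤ FF e A Q U V q L η (Tst k) + V * (n - Tst k) := by
  obtain ⟨hA, hQ, hU, hV, hq, hL, h0, e0, e1, e2⟩ := hp
  have := sum_le_G (rho e A Q U V q L η) (fun i => V * i) (Tst k) n h1 (fun i h3 h4 => by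
      have hK : Kst i = k := Kst_eq h3 (by omega)
      simp only [rho, hK, hpar, if_false]
      push_cast
      split_ifs with h5 h6 <;> linarith)
  unfold FF; linarith

lemma FF_P5 (hp : Par A Q U V q L η) (ε : ℝ) (hε : 0 < ε) : ∃ n0 : ℕ, ∀ n ≥ n0,
    FF e A Q U V q L η n ≤ (U + ε) * n := by
  obtain ⟨j0, hj0⟩ := Tst_small ε hε
  refine ⟨Tst (j0 + 1), fun n hn => ?_⟩
  obtain ⟨k, hk1, hk2⟩ := stage_exists n (by have := Tst_pos (j0 + 1); omega)
  have hk : j0 + 1 ≤ k := by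
    by_contra h
    have := Tst_mono (show k + 1 ≤ j0 + 1 by omega)
    omega
  obtain ⟨j, rfl⟩ : ∃ j, k = j + 1 := ⟨k - 1, by omega⟩
  have h2 := hj0 j (by omega)
  have h3 : (Tst (j + 1) : ℝ) ≤ n := by exact_mod_cast hk1
  have h4 : (0:ℝ) ≤ Tst j := by positivity
  have h5 : (Tst j : ℝ) ≤ Tst (j + 1) := by exact_mod_cast Tst_mono (by omega)
  have h6 := (FF_nonneg_le e A Q U V q L η hp (Tst j)).2
  have h7 : ε * Tst (j + 1) ≤ ε * n := by gcongr
  by_cases hpar : (j + 1 + e) % 2 = 0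
  · have a1 := FF_even_stage e A Q U V q L η hp (j + 1) n hpar hk1 hk2.le
    have a2 := FF_odd_stage e A Q U V q L η hp j (Tst (j + 1)) (by omega) (Tst_mono (by omega)) le_rfl
    obtain ⟨hA, hQ, hU, hV, hq, hL, h0, e0, e1, e2⟩ := hp
    push_cast at a1
    have a3 : 0 ≤ V * Tst j := mul_nonneg (by linarith) h4
    have a4 : η * Tst (j + 1) ≤ (U - V) * Tst (j + 1) := by gcongr
    linarith
  · have a1 := FF_odd_stage e A Q U V q L η hp (j + 1) n hpar hk1 hk2.le
    have a2 := FF_even_stage e A Q U V q L η hp j (Tst (j + 1)) (by omega) (Tst_mono (by omega)) le_rfl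
    obtain ⟨hA, hQ, hU, hV, hq, hL, h0, e0, e1, e2⟩ := hp
    have a3 : 0 ≤ U * Tst j := mul_nonneg (by linarith) h4
    have a4 : V * (n - Tst (j + 1)) ≤ U * (n - Tst (j + 1)) :=
      mul_le_mul_of_nonneg_right hV.le (by linarith)
    have a5 : η * Tst j ≤ 1 * Tst j := by gcongr
    linarith

lemma FF_P6 (hp : Par A Q U V q L η) (ε : ℝ) (hε : 0 < ε) (n0 : ℕ) : ∃ n ≥ n0,
    (U - ε) * n ≤ FF e A Q U V q L η n := by
  obtain ⟨j0, hj0⟩ := Tst_small ε hε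
  obtain ⟨k, hk, hpar⟩ := exists_par e (j0 + n0)
  have hT := Tst_gt (k + 1)
  refine ⟨Tst (k + 1), by omega, ?_⟩
  have h1 := hj0 k (by omega)
  have h6 := (FF_nonneg_le e A Q U V q L η hp (Tst k)).1
  obtain ⟨hA, hQ, hU, hV, hq, hL, h0, e0, e1, e2⟩ := hp
  have := sum_ge_G (rho e A Q U V q L η) (fun i => U * i) (Tst k) (Tst (k + 1)) (Tst_mono (by omega))
    (fun i h1 h2 => by
      have hK : Kst i = k := Kst_eq h1 h2
      simp only [rho, hK, hpar, if_true]
      push_cast; split_ifs <;> linarith)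
  have a5 : U * Tst k ≤ 1 * Tst k := by gcongr; linarith
  have h4 : (0:ℝ) ≤ Tst k := by positivity
  unfold FF at *; linarith

lemma Par.flip {A Q U V q L η : ℝ} (hp : Par A Q U V q L η) :
    Par (1 - L) (1 - q) (1 - V) (1 - U) (1 - Q) (1 - A) η := by
  obtain ⟨hA, hQ, hU, hV, hq, hL, h0, e0, e1, e2⟩ := hp
  constructor <;> linarith

end

structure FP (F : ℕ → ℝ) (A Q U V q L η : ℝ) : Prop where
  p1 : ∀ m n : ℕ, m ≤ n → F n - F m ≤ A * (n - m)
  p1' : ∀ m n : ℕ, m ≤ n → L * (n - m) ≤ F n - F m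
  p2 : ∀ l m0 : ℕ, ∃ m ≥ m0, A * l ≤ F (m + l) - F m
  p2' : ∀ l m0 : ℕ, ∃ m ≥ m0, F (m + l) - F m ≤ L * l
  p3 : ∀ ε : ℝ, 0 < ε → ∃ n0 : ℕ, ∀ n ≥ n0, ∀ m ≤ n, F n - F m ≤ Q * (n - m) + ε * n
  p3' : ∀ ε : ℝ, 0 < ε → ∃ n0 : ℕ, ∀ n ≥ n0, ∀ m ≤ n, q * (n - m) - ε * n ≤ F n - F m
  p4 : ∀ m0 : ℕ, ∃ m ≥ m0, ∃ n : ℕ, (1 + η) * m ≤ n ∧ Q * (n - m) - 1 ≤ F n - F m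
  p4' : ∀ m0 : ℕ, ∃ m ≥ m0, ∃ n : ℕ, (1 + η) * m ≤ n ∧ F n - F m ≤ q * (n - m) + 1
  p5 : ∀ ε : ℝ, 0 < ε → ∃ n0 : ℕ, ∀ n ≥ n0, F n ≤ (U + ε) * n
  p5' : ∀ ε : ℝ, 0 < ε → ∃ n0 : ℕ, ∀ n ≥ n0, (V - ε) * n ≤ F n
  p6 : ∀ ε : ℝ, 0 < ε → ∀ n0 : ℕ, ∃ n ≥ n0, (U - ε) * n ≤ F n
  p6' : ∀ ε : ℝ, 0 < ε → ∀ n0 : ℕ, ∃ n ≥ n0, F n ≤ (V + ε) * n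

lemma FF_FP (A Q U V q L η : ℝ) (hp : Par A Q U V q L η) :
    FP (FF 0 A Q U V q L η) A Q U V q L η := by
  have fl := FF_flip 0 A Q U V q L η
  have hp' := hp.flip
  refine ⟨FF_P1 _ _ _ _ _ _ _ _ hp, FF_P1' _ _ _ _ _ _ _ _ hp, FF_P2 _ _ _ _ _ _ _ _, ?_,
    FF_P3 _ _ _ _ _ _ _ _ hp, ?_, FF_P4 _ _ _ _ _ _ _ _ hp, ?_, FF_P5 _ _ _ _ _ _ _ _ hp, ?_,
    FF_P6 _ _ _ _ _ _ _ _ hp, ?_⟩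
  · intro l m0
    obtain ⟨m, hm, h⟩ := FF_P2 (0 + 1) (1 - L) (1 - q) (1 - V) (1 - U) (1 - Q) (1 - A) η l m0
    refine ⟨m, hm, ?_⟩
    rw [fl, fl] at h; push_cast at h; linarith
  · intro ε hε
    obtain ⟨n0, h⟩ := FF_P3 (0 + 1) _ _ _ _ _ _ η hp' ε hε
    refine ⟨n0, fun n hn m hm => ?_⟩
    have := h n hn m hm
    rw [fl, fl] at this; linarith
  · intro m0
    obtain ⟨m, hm, n, hn, h⟩ := FF_P4 (0 + 1) _ _ _ _ _ _ η hp' m0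
    refine ⟨m, hm, n, hn, ?_⟩
    rw [fl, fl] at h; linarith
  · intro ε hε
    obtain ⟨n0, h⟩ := FF_P5 (0 + 1) _ _ _ _ _ _ η hp' ε hε
    refine ⟨n0, fun n hn => ?_⟩
    have := h n hn
    rw [fl] at this; linarith
  · intro ε hε n0
    obtain ⟨n, hn, h⟩ := FF_P6 (0 + 1) _ _ _ _ _ _ η hp' ε hε n0
    refine ⟨n, hn, ?_⟩
    rw [fl] at h; linarith

lemma le_of_large {x y C : ℝ} (h : ∀ M : ℝ, ∃ t ≥ M, x * t ≤ y * t + C) : x ≤ y := by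
  by_contra hxy
  push Not at hxy
  obtain ⟨t, ht, h⟩ := h ((C + 1) / (x - y))
  have hp : 0 < x - y := by linarith
  rw [ge_iff_le, div_le_iff₀ hp] at ht
  linarith

section
variable {E : Set ℝ} {F : ℕ → ℝ} {K A Q U V q L η : ℝ}

lemma hU_le (hK : 0 < K) (hC : Cmp E F K) (δ s : ℝ) (hδ : 0 ≤ δ) (hs : 0 ≤ s)
    (h : ∃ (m0 : ℕ) (C : ℝ), ∀ m n : ℕ, m0 ≤ m → m ≤ n → (1 + δ) * m ≤ n →
      F n - F m ≤ s * (n - m) + C) : hUpper E δ ≤ s := by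
  refine csInf_le ⟨0, fun x hx => hx.1⟩ ?_
  exact ⟨hs, (hUpper_iff hK hC δ s hδ hs).2 h⟩

lemma le_hU (hK : 0 < K) (hC : Cmp E F K) (hp : Par A Q U V q L η) (hF : FP F A Q U V q L η)
    (δ t : ℝ) (hδ : 0 ≤ δ)
    (h : ∀ s, ∀ (m0 : ℕ) (C : ℝ), (∀ m n : ℕ, m0 ≤ m → m ≤ n → (1 + δ) * m ≤ n →
      F n - F m ≤ s * (n - m) + C) → t ≤ s) : t ≤ hUpper E δ := by
  have hA : 0 ≤ A := by
    obtain ⟨hA, hQ, hU, hV, hq, hL, h0, e0, e1, e2⟩ := hp; linarith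
  refine le_csInf ⟨A, hA, (hUpper_iff hK hC δ A hδ hA).2
    ⟨0, 0, fun m n _ h _ => by linarith [hF.p1 m n h]⟩⟩ ?_
  rintro s ⟨hs, h'⟩
  obtain ⟨m0, C, h'⟩ := (hUpper_iff hK hC δ s hδ hs).1 h'
  exact h s m0 C h'

lemma hL_le (hK : 0 < K) (hC : Cmp E F K) (hp : Par A Q U V q L η) (hF : FP F A Q U V q L η)
    (δ t : ℝ) (hδ : 0 ≤ δ)
    (h : ∀ s, ∀ (m0 : ℕ) (C : ℝ), (∀ m n : ℕ, m0 ≤ m → m ≤ n → (1 + δ) * m ≤ n →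
      s * (n - m) ≤ F n - F m + C) → s ≤ t) : hLower E δ ≤ t := by
  refine csSup_le ⟨L, hp.h0, (hLower_iff hK hC δ L hδ hp.h0).2
    ⟨0, 0, fun m n _ h _ => by linarith [hF.p1' m n h]⟩⟩ ?_
  rintro s ⟨hs, h'⟩
  obtain ⟨m0, C, h'⟩ := (hLower_iff hK hC δ s hδ hs).1 h'
  exact h s m0 C h'

lemma le_hL (hK : 0 < K) (hC : Cmp E F K) (hF : FP F A Q U V q L η)
    (δ s : ℝ) (hδ : 0 ≤ δ) (hs : 0 ≤ s)
    (h : ∃ (m0 : ℕ) (C : ℝ), ∀ m n : ℕ, m0 ≤ m → m ≤ n → (1 + δ) * m ≤ n →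
      s * (n - m) ≤ F n - F m + C) : s ≤ hLower E δ := by
  refine le_csSup ⟨A, ?_⟩ ⟨hs, (hLower_iff hK hC δ s hδ hs).2 h⟩
  rintro s ⟨hs, h'⟩
  obtain ⟨m0, C, h'⟩ := (hLower_iff hK hC δ s hδ hs).1 h'
  refine le_of_large (C := C) fun M => ?_
  have hn := Nat.le_ceil M
  have hn' := Nat.le_ceil ((1 + δ) * m0)
  set l := m0 + ⌈M⌉₊ + ⌈(1 + δ) * (m0 : ℝ)⌉₊
  have hl : (l:ℝ) = m0 + ⌈M⌉₊ + ⌈(1 + δ) * (m0 : ℝ)⌉₊ := by simp only [l]; push_cast; ring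
  have c0 : (0:ℝ) ≤ m0 := by positivity
  have c1 : (0:ℝ) ≤ (⌈M⌉₊ : ℝ) := by positivity
  have c2 : (0:ℝ) ≤ (⌈(1 + δ) * (m0 : ℝ)⌉₊ : ℝ) := by positivity
  refine ⟨l, by linarith, ?_⟩
  have a1 := h' m0 (m0 + l) le_rfl (by omega) (by push_cast; linarith)
  have a2 := hF.p1 m0 (m0 + l) (by omega)
  push_cast at a1 a2
  have e : (m0:ℝ) + l - m0 = l := by ring
  rw [e] at a1 a2
  linarith

lemma dimA (hK : 0 < K) (hC : Cmp E F K) (hp : Par A Q U V q L η) (hF : FP F A Q U V q L η) :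
    assouadDim E = A := by
  have hA : 0 ≤ A := by
    obtain ⟨hA, hQ, hU, hV, hq, hL, h0, e0, e1, e2⟩ := hp; linarith
  apply le_antisymm
  · exact hU_le hK hC 0 A le_rfl hA ⟨0, 0, fun m n _ h _ => by linarith [hF.p1 m n h]⟩
  · refine le_hU hK hC hp hF 0 A le_rfl fun s m0 C h => le_of_large (C := C) fun M => ?_
    obtain ⟨m, hm, h2⟩ := hF.p2 ⌈M⌉₊ m0
    refine ⟨⌈M⌉₊, Nat.le_ceil M, ?_⟩
    have := h m (m + ⌈M⌉₊) hm (by omega) (by push_cast; linarith [Nat.cast_nonneg (α := ℝ) ⌈M⌉₊])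
    push_cast at this
    linarith

lemma dimL (hK : 0 < K) (hC : Cmp E F K) (hp : Par A Q U V q L η) (hF : FP F A Q U V q L η) :
    lowerAssouadDim E = L := by
  apply le_antisymm
  · refine hL_le hK hC hp hF 0 L le_rfl fun s m0 C h => le_of_large (C := C) fun M => ?_
    obtain ⟨m, hm, h2⟩ := hF.p2' ⌈M⌉₊ m0
    refine ⟨⌈M⌉₊, Nat.le_ceil M, ?_⟩
    have := h m (m + ⌈M⌉₊) hm (by omega) (by push_cast; linarith [Nat.cast_nonneg (α := ℝ) ⌈M⌉₊])
    push_cast at this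
    linarith
  · exact le_hL hK hC hF 0 L le_rfl hp.h0 ⟨0, 0, fun m n _ h _ => by linarith [hF.p1' m n h]⟩

lemma gap {δ : ℝ} (hδ : 0 < δ) (ε : ℝ) (hε : 0 < ε) (m n : ℕ) (h : (1 + δ) * m ≤ n) :
    ε * (δ / (1 + δ)) * n ≤ ε * (n - m) := by
  have : δ / (1 + δ) * n ≤ n - m := by
    rw [div_mul_eq_mul_div, div_le_iff₀ (by linarith)]
    nlinarith
  calc _ = ε * (δ / (1 + δ) * n) := by ring
    _ ≤ _ := by gcongr

lemma large_gap (hη : 0 < η) (m0 : ℕ) (M : ℝ) (m n : ℕ) (hm : m ≥ m0 + ⌈M / η⌉₊)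
    (h : (1 + η) * m ≤ n) : (n:ℝ) - m ≥ M ∧ m ≤ n ∧ m0 ≤ m := by
  have h1 := Nat.le_ceil (M / η)
  have h2 : (⌈M / η⌉₊ : ℝ) ≤ m := by exact_mod_cast (by omega : ⌈M / η⌉₊ ≤ m)
  have h3 : M ≤ m * η := by rw [← div_le_iff₀ hη]; linarith
  have h4 : (0:ℝ) ≤ m := by positivity
  refine ⟨by nlinarith, ?_, by omega⟩
  have : (m:ℝ) ≤ n := by nlinarith
  exact_mod_cast this

lemma dimqA (hK : 0 < K) (hC : Cmp E F K) (hp : Par A Q U V q L η) (hF : FP F A Q U V q L η) :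
    qADim E = Q := by
  have hQ0 : 0 ≤ Q := by
    obtain ⟨hA, hQ, hU, hV, hq, hL, h0, e0, e1, e2⟩ := hp; linarith
  have ub : ∀ x ∈ hUpper E '' Ioo (0:ℝ) 1, x ≤ Q := by
    rintro _ ⟨δ, ⟨hδ, _⟩, rfl⟩
    refine le_of_forall_pos_le_add fun ε hε => ?_
    refine hU_le hK hC δ _ hδ.le (by linarith) ?_
    obtain ⟨n0, hn0⟩ := hF.p3 (ε * (δ / (1 + δ))) (by positivity)
    refine ⟨n0, 0, fun m n h1 h2 h3 => ?_⟩
    have a1 := hn0 n (by omega) m h2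
    have a2 := gap hδ ε hε m n h3
    linarith
  have e0 := hp.e0
  have e1 := hp.e1
  have hmem : hUpper E (η / 2) ∈ hUpper E '' Ioo (0:ℝ) 1 :=
    ⟨η / 2, ⟨by linarith, by linarith⟩, rfl⟩
  apply le_antisymm
  · exact csSup_le ⟨_, hmem⟩ ub
  · refine le_trans ?_ (le_csSup ⟨Q, ub⟩ hmem)
    refine le_hU hK hC hp hF _ Q (by linarith) fun s m0 C h => le_of_large (C := C + 1) fun M => ?_
    obtain ⟨m, hm, n, hn, h2⟩ := hF.p4 (m0 + ⌈M / η⌉₊)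
    obtain ⟨g1, g2, g3⟩ := large_gap e0 m0 M m n hm hn
    refine ⟨n - m, g1, ?_⟩
    have := h m n g3 g2 (by nlinarith [Nat.cast_nonneg (α := ℝ) m])
    linarith

lemma dimqL (hK : 0 < K) (hC : Cmp E F K) (hp : Par A Q U V q L η) (hF : FP F A Q U V q L η) :
    qLDim E = q := by
  have hq0 : 0 ≤ q := hp.h0.trans hp.hL
  have lb : ∀ x ∈ hLower E '' Ioo (0:ℝ) 1, q ≤ x := by
    rintro _ ⟨δ, ⟨hδ, _⟩, rfl⟩
    have hnn : 0 ≤ hLower E δ := le_trans hp.h0 (le_hL hK hC hF δ L hδ.le hp.h0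
      ⟨0, 0, fun m n _ h _ => by linarith [hF.p1' m n h]⟩)
    refine le_of_forall_pos_le_add fun ε hε => ?_
    rw [← sub_le_iff_le_add]
    rcases le_total (q - ε) 0 with h | h
    · exact h.trans hnn
    refine le_hL hK hC hF δ _ hδ.le h ?_
    obtain ⟨n0, hn0⟩ := hF.p3' (ε * (δ / (1 + δ))) (by positivity)
    refine ⟨n0, 0, fun m n h1 h2 h3 => ?_⟩
    have a1 := hn0 n (by omega) m h2
    have a2 := gap hδ ε hε m n h3
    linarith
  have e0 := hp.e0
  have e1 := hp.e1
  have hmem : hLower E (η / 2) ∈ hLower E '' Ioo (0:ℝ) 1 :=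
    ⟨η / 2, ⟨by linarith, by linarith⟩, rfl⟩
  apply le_antisymm
  · refine le_trans (csInf_le ⟨q, lb⟩ hmem) ?_
    refine hL_le hK hC hp hF _ q (by linarith) fun s m0 C h => le_of_large (C := C + 1) fun M => ?_
    obtain ⟨m, hm, n, hn, h2⟩ := hF.p4' (m0 + ⌈M / η⌉₊)
    obtain ⟨g1, g2, g3⟩ := large_gap e0 m0 M m n hm hn
    refine ⟨n - m, g1, ?_⟩
    have := h m n g3 g2 (by nlinarith [Nat.cast_nonneg (α := ℝ) m])
    linarith
  · exact le_csInf ⟨_, hmem⟩ lb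

lemma box_scale (hK : 0 < K) (hC : Cmp E F K) (hF0 : F 0 = 0)
    (h1 : ∀ r, coverNumLoc E r 1 = coverNum E r) (n : ℕ) (r : ℝ) (hr : 0 < r)
    (a : 1 ≤ r * 2 ^ n) (b : r * 2 ^ n ≤ 2) :
    F n * Real.log 2 - Real.log K ≤ Real.log (coverNum E r) ∧
    Real.log (coverNum E r) ≤ F n * Real.log 2 + Real.log K ∧
    Real.log (1 / r) ≤ n * Real.log 2 ∧ n * Real.log 2 ≤ Real.log (1 / r) + Real.log 2 := by
  obtain ⟨c1, c2⟩ := hC 0 n r 1 (Nat.zero_le _) hr le_rfl a b (by simp) (by simp)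
  rw [h1, hF0, sub_zero] at c1 c2
  have hp : (0:ℝ) < (2:ℝ) ^ (F n) := by positivity
  have hN : (0:ℝ) < coverNum E r := by
    by_contra h
    have : (coverNum E r : ℝ) = 0 := le_antisymm (not_lt.1 h) (by positivity)
    rw [this] at c1; linarith
  have l1 := Real.log_le_log hp c1
  have l2 := Real.log_le_log hN c2
  rw [Real.log_mul hK.ne' hN.ne', Real.log_rpow (by norm_num)] at l1
  rw [Real.log_mul hK.ne' hp.ne', Real.log_rpow (by norm_num)] at l2
  have hn : (0:ℝ) < 2 ^ n := by positivity
  have l3 := Real.log_le_log (by norm_num) a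
  have l4 := Real.log_le_log (by positivity) b
  rw [Real.log_mul hr.ne' hn.ne', Real.log_pow] at l3 l4
  rw [Real.log_one] at l3
  rw [one_div, Real.log_inv]
  refine ⟨by linarith, by linarith, by linarith, by linarith⟩

lemma tendsto_log_inv : Tendsto (fun r : ℝ => Real.log (1 / r)) (nhdsWithin 0 (Ioi 0)) atTop := by
  simp only [one_div]
  exact Real.tendsto_log_atTop.comp tendsto_inv_nhdsGT_zero

lemma tendsto_half : Tendsto (fun n : ℕ => (1 / 2 ^ n : ℝ)) atTop (nhdsWithin 0 (Ioi 0)) := by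
  refine tendsto_nhdsWithin_iff.2 ⟨?_, Eventually.of_forall fun n => by simp⟩
  have := tendsto_pow_atTop_nhds_zero_of_lt_one (r := (1/2:ℝ)) (by norm_num) (by norm_num)
  simpa [one_div] using this

lemma box_ev (hK : 0 < K) (hC : Cmp E F K) (hF0 : F 0 = 0)
    (h1 : ∀ r, coverNumLoc E r 1 = coverNum E r)
    (n0 : ℕ) (M : ℝ) :
    ∀ᶠ r in nhdsWithin (0:ℝ) (Ioi 0), ∃ n ≥ n0, 0 < Real.log (1 / r) ∧ M ≤ Real.log (1 / r) ∧
      F n * Real.log 2 - Real.log K ≤ Real.log (coverNum E r) ∧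
      Real.log (coverNum E r) ≤ F n * Real.log 2 + Real.log K ∧
      Real.log (1 / r) ≤ n * Real.log 2 ∧ n * Real.log 2 ≤ Real.log (1 / r) + Real.log 2 := by
  have hl2 : 0 < Real.log 2 := Real.log_pos (by norm_num)
  filter_upwards [tendsto_log_inv.eventually_ge_atTop M,
    tendsto_log_inv.eventually_gt_atTop (n0 * Real.log 2), self_mem_nhdsWithin] with r hr1 hr2 hr0
  have hpos : 0 < Real.log (1 / r) := lt_of_le_of_lt (by positivity) hr2
  have hr0' : 0 < r := hr0
  have hle : r ≤ 1 := by
    by_contra h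
    push Not at h
    have := Real.log_pos h
    rw [one_div, Real.log_inv] at hpos
    linarith
  obtain ⟨n, b1, b2⟩ := exists_dyadic' r hr0' hle
  obtain ⟨c1, c2, c3, c4⟩ := box_scale hK hC hF0 h1 n r hr0' b1 b2.le
  refine ⟨n, ?_, hpos, hr1, c1, c2, c3, c4⟩
  have : (n0:ℝ) < n := lt_of_mul_lt_mul_right (hr2.trans_le c3) hl2.le
  exact_mod_cast this.le

lemma box_dims (hK : 0 < K) (hC : Cmp E F K) (hF0 : F 0 = 0)
    (h1 : ∀ r, coverNumLoc E r 1 = coverNum E r) (hU0 : 0 ≤ U) (hV0 : 0 ≤ V)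
    (hF : FP F A Q U V q L η) :
    upperBoxDim E = U ∧ lowerBoxDim E = V := by
  have hl2 : 0 < Real.log 2 := Real.log_pos (by norm_num)
  set g := fun r : ℝ => Real.log (coverNum E r) / Real.log (1 / r) with hg
  have ev1 : ∀ ε > 0, ∀ᶠ r in nhdsWithin (0:ℝ) (Ioi 0), g r ≤ U + ε := by
    intro ε hε
    obtain ⟨n0, hn0⟩ := hF.p5 (ε / 2) (by positivity)
    filter_upwards [box_ev hK hC hF0 h1 n0
      (((U + ε / 2) * Real.log 2 + Real.log K) / (ε / 2))] with r ⟨n, hn, c0, c1, c2, c3, c4, c5⟩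
    rw [hg]
    simp only
    rw [div_le_iff₀ c0]
    rw [div_le_iff₀ (by positivity)] at c1
    have a1 : F n * Real.log 2 ≤ (U + ε / 2) * n * Real.log 2 := by gcongr; exact hn0 n hn
    have a2 : (U + ε / 2) * (n * Real.log 2) ≤ (U + ε / 2) * (Real.log (1 / r) + Real.log 2) := by
      gcongr
    linarith
  have ev2 : ∀ ε > 0, ∀ᶠ r in nhdsWithin (0:ℝ) (Ioi 0), V - ε ≤ g r := by
    intro ε hε
    obtain ⟨n0, hn0⟩ := hF.p5' (ε / 2) (by positivity)
    filter_upwards [box_ev hK hC hF0 h1 n0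
      (((ε / 2) * Real.log 2 + Real.log K) / (ε / 2))] with r ⟨n, hn, c0, c1, c2, c3, c4, c5⟩
    rw [hg]
    simp only
    rw [le_div_iff₀ c0]
    rw [div_le_iff₀ (by positivity)] at c1
    have a1 : (V - ε / 2) * n * Real.log 2 ≤ F n * Real.log 2 := by gcongr; exact hn0 n hn
    have a2 : (ε / 2) * (n * Real.log 2) ≤ (ε / 2) * (Real.log (1 / r) + Real.log 2) := by
      gcongr
    have a3 : V * Real.log (1 / r) ≤ V * (n * Real.log 2) := by gcongr
    linarith
  have sc : ∀ n : ℕ, Real.log (1 / (1 / 2 ^ n : ℝ)) = n * Real.log 2 := by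
    intro n; rw [one_div_one_div, Real.log_pow]
  have bs : ∀ n : ℕ, F n * Real.log 2 - Real.log K ≤ Real.log (coverNum E (1 / 2 ^ n)) ∧
      Real.log (coverNum E (1 / 2 ^ n)) ≤ F n * Real.log 2 + Real.log K := by
    intro n
    have e1 : (1 / 2 ^ n : ℝ) * 2 ^ n = 1 := by field_simp
    obtain ⟨x, y, _, _⟩ := box_scale hK hC hF0 h1 n (1 / 2 ^ n) (by positivity) (by rw [e1])
      (by rw [e1]; norm_num)
    exact ⟨x, y⟩
  have lar : ∀ ε > 0, ∃ n1 : ℕ, ∀ n ≥ n1, 0 < n * Real.log 2 ∧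
      Real.log K ≤ ε * (n * Real.log 2) := by
    intro ε hε
    refine ⟨⌈Real.log K / (ε * Real.log 2)⌉₊ + 1, fun n hn => ?_⟩
    have b1 := Nat.le_ceil (Real.log K / (ε * Real.log 2))
    have b2 : ((⌈Real.log K / (ε * Real.log 2)⌉₊ + 1 : ℕ) : ℝ) ≤ n := by exact_mod_cast hn
    push_cast at b2
    have b3 : Real.log K / (ε * Real.log 2) ≤ n := by linarith
    rw [div_le_iff₀ (by positivity)] at b3
    have b4 : (0:ℝ) < n := by exact_mod_cast (by omega : 0 < n)
    exact ⟨by positivity, by linarith⟩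
  have fr1 : ∀ ε > 0, ∃ᶠ r in nhdsWithin (0:ℝ) (Ioi 0), U - ε ≤ g r := by
    intro ε hε
    refine tendsto_half.frequently (Filter.frequently_atTop.2 fun n0 => ?_)
    obtain ⟨n1, hn1⟩ := lar (ε / 2) (by positivity)
    obtain ⟨n, hn, h⟩ := hF.p6 (ε / 2) (by positivity) (n0 + n1)
    obtain ⟨d1, d2⟩ := hn1 n (by omega)
    refine ⟨n, by omega, ?_⟩
    rw [hg]
    simp only
    rw [sc, le_div_iff₀ d1]
    have a1 : (U - ε / 2) * n * Real.log 2 ≤ F n * Real.log 2 := by gcongr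
    linarith [(bs n).1]
  have fr2 : ∀ ε > 0, ∃ᶠ r in nhdsWithin (0:ℝ) (Ioi 0), g r ≤ V + ε := by
    intro ε hε
    refine tendsto_half.frequently (Filter.frequently_atTop.2 fun n0 => ?_)
    obtain ⟨n1, hn1⟩ := lar (ε / 2) (by positivity)
    obtain ⟨n, hn, h⟩ := hF.p6' (ε / 2) (by positivity) (n0 + n1)
    obtain ⟨d1, d2⟩ := hn1 n (by omega)
    refine ⟨n, by omega, ?_⟩
    rw [hg]
    simp only
    rw [sc, div_le_iff₀ d1]
    have a1 : F n * Real.log 2 ≤ (V + ε / 2) * n * Real.log 2 := by gcongr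
    linarith [(bs n).2]
  have bd1 : IsBoundedUnder (· ≤ ·) (nhdsWithin (0:ℝ) (Ioi 0)) g := ⟨U + 1, ev1 1 one_pos⟩
  have bd2 : IsBoundedUnder (· ≥ ·) (nhdsWithin (0:ℝ) (Ioi 0)) g := ⟨V - 1, ev2 1 one_pos⟩
  constructor
  · apply le_antisymm
    · refine le_of_forall_pos_le_add fun ε hε => ?_
      exact limsup_le_of_le bd2.isCoboundedUnder_le (ev1 ε hε)
    · refine le_of_forall_pos_le_add fun ε hε => ?_
      rw [← sub_le_iff_le_add]
      exact le_limsup_of_frequently_le (fr1 ε hε) bd1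
  · apply le_antisymm
    · refine le_of_forall_pos_le_add fun ε hε => ?_
      exact liminf_le_of_frequently_le (fr2 ε hε) bd2
    · refine le_of_forall_pos_le_add fun ε hε => ?_
      rw [← sub_le_iff_le_add]
      exact le_liminf_of_le bd1.isCoboundedUnder_ge (ev2 ε hε)

end

/-- Given `1 ≤ a ≤ α ≤ u < v ≤ β ≤ b`, there is a compact `E ⊆ [0,1]` realizing
`dim_A E = 1/a`, `dim_qA E = 1/α`, upper box `= 1/u`, lower box `= 1/v`,
`dim_qL E = 1/β` and `dim_L E = 1/b`. -/
theorem exists_set_with_prescribed_dimensions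
    (a α u v β b : ℝ)
    (h1 : 1 ≤ a) (h2 : a ≤ α) (h3 : α ≤ u) (h4 : u < v) (h5 : v ≤ β) (h6 : β ≤ b) :
    ∃ E : Set ℝ, E ⊆ Set.Icc (0:ℝ) 1 ∧ IsCompact E ∧
      assouadDim E = 1 / a ∧ qADim E = 1 / α ∧
      upperBoxDim E = 1 / u ∧ lowerBoxDim E = 1 / v ∧
      qLDim E = 1 / β ∧ lowerAssouadDim E = 1 / b := by
  have hinv : ∀ x y : ℝ, 1 ≤ x → x ≤ y → 1 / y ≤ 1 / x := fun x y hx hxy =>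
    one_div_le_one_div_of_le (by linarith) hxy
  have hUV : 1 / v < 1 / u := one_div_lt_one_div_of_lt (by linarith) h4
  have hlt1 : 1 / u ≤ 1 := by rw [div_le_one (by linarith)]; linarith
  have hv0 : 0 < 1 / v := one_div_pos.2 (by linarith)
  have hb0 : 0 < 1 / b := one_div_pos.2 (by linarith)
  have hp : Par (1 / a) (1 / α) (1 / u) (1 / v) (1 / β) (1 / b) (1 / u - 1 / v) := by
    refine ⟨?_, hinv _ _ h1 h2, hinv _ _ (by linarith) h3, hUV, hinv _ _ (by linarith) h5,
      hinv _ _ (by linarith) h6, hb0.le, by linarith, by linarith, le_rfl⟩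
    rw [div_le_one (by linarith)]; exact h1
  have hF := FF_FP _ _ _ _ _ _ _ hp
  have hF0 : FF 0 (1 / a) (1 / α) (1 / u) (1 / v) (1 / β) (1 / b) (1 / u - 1 / v) 0 = 0 := by
    simp [FF]
  obtain ⟨E, hE1, hE2, hC, hloc⟩ := exists_E
    (FF 0 (1 / a) (1 / α) (1 / u) (1 / v) (1 / β) (1 / b) (1 / u - 1 / v)) hF0
    (fun n => by have := hF.p1' n (n + 1) (by omega); push_cast at this; linarith)
    (fun n => by have := hF.p1 n (n + 1) (by omega); push_cast at this; linarith [hp.hA])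
  have hK : (0:ℝ) < 36 := by norm_num
  obtain ⟨b1, b2⟩ := box_dims hK hC hF0 hloc (by linarith) hv0.le hF
  exact ⟨E, hE1, hE2, dimA hK hC hp hF, dimqA hK hC hp hF, b1, b2, dimqL hK hC hp hF,
    dimL hK hC hp hF⟩
end
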